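/- Let n ≥ 0, 0 < ρ < 1, and z₀ > 0. Let Ω ⊆ ℝ^{n+1} be measurable with γ_{n+1}(Ω) = 1/2, let z := ∫_Ω x dγ_{n+1}(x), and assume z ≠ 0 with ‖z‖ ≥ z₀. Let H ⊆ ℝ^{n+1} be a half space with γ_{n+1}(H) = 1/2 such that ∫_H x dγ_{n+1}(x) is a positive scalar multiple of z. Define δ := ∫ 1_H(x) T_ρ1_H(x) dγ_{n+1}(x) − ∫ 1_Ω(x) T_ρ1_Ω(x) dγ_{n+1}(x) and η_ρ := ∫_{ℝ^{n+1}} Φ(ρ⟨z/‖z‖, x⟩/√(1 − ρ²)) (1_H(x) − 1_Ω(x)) dγ_{n+1}(x). Then η_ρ ≥ 0 and 10⁻⁹ ρ² z₀² (1 − ρ²)² η_ρ ≤ δ ≤ 2 η_ρ. -/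

import Mathlib

/-!
Write `Q(r, f, g) = E[f(X) g(Y)]` for `r`-correlated standard Gaussian vectors `X`, `Y`, let `v` be the
inner normal of `H`, and let `D(r) = Q(r, 1_H, 1_H) - Q(r, 1_Ω, 1_Ω)` be the deficit, so `δ = D(ρ)`.
A half space of measure `1 / 2` is `{x | 0 < ⟪x, v⟫}`, its barycenter is a multiple of `v`, and
`T_ρ 1_H(x) = Φ(ρ⟪x, v⟫ / √(1 - ρ²))`; hence `η = Q(ρ, 1_H - 1_Ω, 1_H)`.

Upper bound: `2 η - δ = Q(ρ, 1_H - 1_Ω, 1_H - 1_Ω) ≥ 0` (`deficit_le`).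

Lower bound: let `bary Ω = s • bary H`, where `z₀ ≤ s`. Three facts about `D` are combined.

* Doubling (`integral_double`): among three Gaussians `X, Y, Z` in a plane, with `Y` on the bisector of
  `X` and `Z`, the quantity `1_Ω(Y) + 1_Ω(X) 1_Ω(Z) - 1_Ω(Y) 1_Ω(X) - 1_Ω(Y) 1_Ω(Z)` is nonnegative,
  and it vanishes identically when `Ω` is replaced by `H`. Hence `D(2 r² - 1) ≤ 2 D(r)`
  (`double_le`, `double_eq`).
* Spectral gap (`Q_gap`): the function `g = 1_Ω - s 1_H - (1 - s) / 2` is orthogonal to constants and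
  to linear functions, so `r⁻² Q(r, g, g)` is nondecreasing. This uses no Hermite expansion:
  `Q(r, g, g)` is logarithmically convex along geometric progressions of correlations
  (`Q_logconvex`) and is `O(r²)` at `0` by the Mehler kernel (`Q_small`).
* Reference functional (`refB`): `Q(r, g, g) = B(r) - D(r)`, where
  `B(r) = (1 - s)² (Q(r, 1_H, 1_H) - 1 / 4) + 2 s Q(r, 1_H - 1_Ω, 1_H)` is nonnegative, is at least
  `2 s η` at `r = ρ`, and grows at most like `r / √(1 - r²)`, because `Φ` is concave on the half line
  (`refB_concave`).

The remaining argument (`bootstrap`) concerns only the real functions `D` and `B`: the spectral gap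
gives `D ≥ c B` for small correlations, doubling transports this to correlations close to `1`, and the
outcome is `D(r) ≥ c (1 - r²)² B(r)`, which implies the claim because `z₀ ≤ 1`.
-/

open MeasureTheory Real Set Filter
open scoped RealInnerProductSpace ENNReal

noncomputable section

/-- `ℝ^k` with the Euclidean structure. -/
abbrev Euc (k : ℕ) : Type := EuclideanSpace ℝ (Fin k)

/-- Standard Gaussian density on `ℝ^k`. -/
def gaussDensity (k : ℕ) (x : Euc k) : ℝ :=
  (2 * π) ^ (-(k : ℝ) / 2) * Real.exp (-‖x‖ ^ 2 / 2)

/-- Standard Gaussian measure on `ℝ^k`. -/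
def gaussMeasure (k : ℕ) : Measure (Euc k) :=
  volume.withDensity fun x => ENNReal.ofReal (gaussDensity k x)

/-- Ornstein–Uhlenbeck operator with correlation `ρ`. -/
def ouOp (k : ℕ) (ρ : ℝ) (f : Euc k → ℝ) (x : Euc k) : ℝ :=
  ∫ y, f (ρ • x + Real.sqrt (1 - ρ ^ 2) • y) ∂(gaussMeasure k)

/-- Noise stability of a set with correlation `ρ`. -/
def noiseStability (k : ℕ) (ρ : ℝ) (Ω : Set (Euc k)) : ℝ :=
  ∫ x, Ω.indicator (fun _ => (1 : ℝ)) x * ouOp k ρ (Ω.indicator fun _ => (1 : ℝ)) x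
    ∂(gaussMeasure k)

/-- A half space: `{x : ⟨x,u⟩ > t}` for a unit vector `u`. -/
def IsHalfSpace (k : ℕ) (H : Set (Euc k)) : Prop :=
  ∃ (u : Euc k) (t : ℝ), ‖u‖ = 1 ∧ H = {x | t < ⟪x, u⟫}

/-- The standard Gaussian cumulative distribution function. -/
def Phi (t : ℝ) : ℝ := ∫ s in Iio t, (2 * π) ^ (-(1 : ℝ) / 2) * Real.exp (-s ^ 2 / 2)

/-- The Gaussian barycenter of `Ω ⊆ ℝ^k`. -/
def bary (k : ℕ) (Ω : Set (Euc k)) : Euc k := ∫ x in Ω, x ∂(gaussMeasure k)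

/-! ### The standard Gaussian measure -/

open ProbabilityTheory

/-- The measure with the Gaussian density is Mathlib's standard Gaussian measure: the characteristic
functions agree. -/
lemma gaussMeasure_eq (k : ℕ) : gaussMeasure k = stdGaussian (Euc k) := by
  have hI : Integrable (gaussDensity k) := by
    have := GaussianFourier.integrable_cexp_neg_mul_sq_norm_add (V := Euc k) (b := (1/2 : ℂ))
      (by norm_num) 0 0
    have h2 := this.norm.const_mul ((2 * π) ^ (-(k : ℝ) / 2))
    refine h2.congr (Filter.Eventually.of_forall fun x => ?_)
    simp only [gaussDensity, Complex.norm_exp]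
    congr 2
    simp [← Complex.ofReal_pow]
    ring
  have : IsFiniteMeasure (gaussMeasure k) :=
    isFiniteMeasure_withDensity_ofReal hI.2
  refine Measure.ext_of_charFun ?_
  ext t
  rw [charFun_stdGaussian, charFun_apply, gaussMeasure,
    integral_withDensity_eq_integral_toReal_smul₀]
  rotate_left
  · exact hI.aestronglyMeasurable.aemeasurable.ennreal_ofReal
  · simp
  have hpos : ∀ x, 0 ≤ gaussDensity k x := fun x => by unfold gaussDensity; positivity
  simp_rw [ENNReal.toReal_ofReal (hpos _)]
  have := GaussianFourier.integral_cexp_neg_mul_sq_norm_add (V := Euc k) (b := (1/2 : ℂ))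
      (by norm_num) Complex.I t
  have e : ∀ x : Euc k, gaussDensity k x • Complex.exp (⟪x, t⟫ * Complex.I)
      = (((2 * π) ^ (-(k : ℝ) / 2) : ℝ) : ℂ) *
        Complex.exp (-(1/2) * ‖x‖ ^ 2 + Complex.I * ⟪t, x⟫) := by
    intro x
    rw [Complex.exp_add, gaussDensity, real_inner_comm]
    simp only [Complex.real_smul]
    push_cast
    rw [mul_assoc]
    congr 3 <;> ring_nf
  simp_rw [e]
  rw [integral_const_mul, this]
  rw [← mul_assoc]
  have h3 : (((2 * π) ^ (-(k : ℝ) / 2) : ℝ) : ℂ) *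
      (π / (1 / 2 : ℂ)) ^ ((Module.finrank ℝ (Euc k) : ℂ) / 2) = 1 := by
    have : (π / (1 / 2 : ℂ)) ^ ((Module.finrank ℝ (Euc k) : ℂ) / 2)
      = (((2 * π) ^ ((k : ℝ) / 2) : ℝ) : ℂ) := by
      rw [Complex.ofReal_cpow (by positivity)]
      simp
      ring_nf
    rw [this, ← Complex.ofReal_mul, ← Real.rpow_add (by positivity)]
    simp [neg_div]
  rw [h3, one_mul]
  congr 1
  simp
  ring

instance gaussMeasure_prob (k : ℕ) : IsProbabilityMeasure (gaussMeasure k) := by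
  rw [gaussMeasure_eq]; infer_instance

instance gaussMeasure_isGaussian (k : ℕ) : IsGaussian (gaussMeasure k) := by
  rw [gaussMeasure_eq]; infer_instance

/-- Invariance of a pair of independent standard Gaussians under the rotation of the pair with cosine
`c` and sine `s`. -/
lemma map_rot (k : ℕ) (c s : ℝ) (h : c ^ 2 + s ^ 2 = 1) :
    ((gaussMeasure k).prod (gaussMeasure k)).map
      (fun p : Euc k × Euc k => (c • p.1 + s • p.2, -s • p.1 + c • p.2))
      = (gaussMeasure k).prod (gaussMeasure k) := by
  obtain ⟨θ, hc, hs⟩ : ∃ θ : ℝ, c = Real.cos θ ∧ s = Real.sin θ := by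
    refine ⟨Complex.arg ⟨c, s⟩, ?_, ?_⟩
    · have hn : ‖(⟨c, s⟩ : ℂ)‖ = 1 := by
        rw [Complex.norm_def, Complex.normSq_mk, ← sq, ← sq, h, Real.sqrt_one]
      rw [Complex.cos_arg (by intro h0; rw [h0] at hn; simp at hn), hn]; simp
    · have hn : ‖(⟨c, s⟩ : ℂ)‖ = 1 := by
        rw [Complex.norm_def, Complex.normSq_mk, ← sq, ← sq, h, Real.sqrt_one]
      rw [Complex.sin_arg, hn]; simp
  have := IsGaussian.map_rotation_eq_self (μ := gaussMeasure k)
    (by rw [gaussMeasure_eq]; simp) θ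
  convert this using 2
  ext p : 1
  rw [ContinuousLinearMap.rotation_apply, hc, hs]

/-! ### Bounded functions and the noise bilinear form -/

/-- Bounded measurable real functions. -/
def Bdd {α : Type*} [MeasurableSpace α] (g : α → ℝ) : Prop :=
  Measurable g ∧ ∃ M, ∀ x, |g x| ≤ M

namespace Bdd

variable {α β : Type*} [MeasurableSpace α] [MeasurableSpace β] {f g : α → ℝ}

lemma const (c : ℝ) : Bdd (fun _ : α => c) := ⟨measurable_const, |c|, fun _ => le_rfl⟩

lemma ind {s : Set α} (hs : MeasurableSet s) : Bdd (s.indicator fun _ => (1 : ℝ)) := by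
  refine ⟨measurable_const.indicator hs, 1, fun x => ?_⟩
  by_cases h : x ∈ s <;> simp [h]

lemma add (hf : Bdd f) (hg : Bdd g) : Bdd (fun x => f x + g x) := by
  obtain ⟨hf, M, hM⟩ := hf
  obtain ⟨hg, N, hN⟩ := hg
  exact ⟨hf.add hg, M + N, fun x => (abs_add_le _ _).trans (add_le_add (hM x) (hN x))⟩

lemma mul (hf : Bdd f) (hg : Bdd g) : Bdd (fun x => f x * g x) := by
  obtain ⟨hf, M, hM⟩ := hf
  obtain ⟨hg, N, hN⟩ := hg
  exact ⟨hf.mul hg, M * N, fun x => by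
    rw [abs_mul]
    exact mul_le_mul (hM x) (hN x) (abs_nonneg _) ((abs_nonneg _).trans (hM x))⟩

lemma smul (c : ℝ) (hf : Bdd f) : Bdd (fun x => c * f x) := (const c).mul hf

lemma sub (hf : Bdd f) (hg : Bdd g) : Bdd (fun x => f x - g x) := by
  have := hf.add (hg.smul (-1))
  convert this using 2
  ring

lemma comp (hf : Bdd f) {φ : β → α} (hφ : Measurable φ) : Bdd (fun x => f (φ x)) :=
  ⟨hf.1.comp hφ, hf.2.imp fun _ hM _ => hM _⟩

lemma integrable (hf : Bdd f) (μ : Measure α) [IsFiniteMeasure μ] : Integrable f μ := by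
  obtain ⟨hf, M, hM⟩ := hf
  exact Integrable.of_bound hf.aestronglyMeasurable M (Eventually.of_forall hM)

end Bdd

lemma Bdd.ou {k : ℕ} {g : Euc k → ℝ} (hg : Bdd g) (r : ℝ) : Bdd (ouOp k r g) := by
  refine ⟨?_, ?_⟩
  · have : StronglyMeasurable fun p : Euc k × Euc k => g (r • p.1 + √(1 - r ^ 2) • p.2) :=
      (hg.1.comp (by fun_prop)).stronglyMeasurable
    exact this.integral_prod_right.measurable
  · obtain ⟨-, M, hM⟩ := hg
    refine ⟨M, fun x => ?_⟩
    have := norm_integral_le_of_norm_le_const (μ := gaussMeasure k)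
      (f := fun y => g (r • x + √(1 - r ^ 2) • y)) (C := M) (Eventually.of_forall fun y => hM _)
    simpa [ouOp] using this

lemma map_neg_gauss (k : ℕ) : (gaussMeasure k).map (fun x => -x) = gaussMeasure k := by
  have := stdGaussian_map (LinearIsometryEquiv.neg ℝ (E := Euc k))
  rw [gaussMeasure_eq]
  exact this

lemma integral_prod_neg {k : ℕ} (G : Euc k → Euc k → ℝ) :
    ∫ p, G p.1 (-p.2) ∂((gaussMeasure k).prod (gaussMeasure k))
      = ∫ p, G p.1 p.2 ∂((gaussMeasure k).prod (gaussMeasure k)) := by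
  have hm : MeasurePreserving (Prod.map id (fun x => -x) : Euc k × Euc k → Euc k × Euc k)
      ((gaussMeasure k).prod (gaussMeasure k)) ((gaussMeasure k).prod (gaussMeasure k)) :=
    (MeasurePreserving.id _).prod ⟨measurable_neg, map_neg_gauss k⟩
  exact hm.integral_comp ((MeasurableEquiv.refl (Euc k)).prodCongr
    (MeasurableEquiv.neg (Euc k))).measurableEmbedding (fun p => G p.1 p.2)

lemma integral_rot {k : ℕ} {c s : ℝ} (h : c ^ 2 + s ^ 2 = 1) {G : Euc k × Euc k → ℝ}
    (hG : Measurable G) :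
    ∫ p, G (c • p.1 + s • p.2, -s • p.1 + c • p.2) ∂((gaussMeasure k).prod (gaussMeasure k))
      = ∫ p, G p ∂((gaussMeasure k).prod (gaussMeasure k)) := by
  conv_rhs => rw [← map_rot k c s h]
  rw [integral_map (by fun_prop) hG.aestronglyMeasurable]

/-- As `integral_rot`, for the reflection `(x, y) ↦ (c x + s y, s x - c y)`, which exchanges the two
members of a `c`-correlated pair `(x, c x + s y)`. -/
lemma integral_refl {k : ℕ} {c s : ℝ} (h : c ^ 2 + s ^ 2 = 1) {G : Euc k × Euc k → ℝ}
    (hG : Measurable G) :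
    ∫ p, G (c • p.1 + s • p.2, s • p.1 - c • p.2) ∂((gaussMeasure k).prod (gaussMeasure k))
      = ∫ p, G p ∂((gaussMeasure k).prod (gaussMeasure k)) := by
  have h1 := integral_rot h (G := fun p => G (p.1, -p.2)) (by fun_prop)
  have h2 := integral_prod_neg (fun x y => G (x, y))
  simp only at h1 h2
  rw [← h2, ← h1]
  congr 1; ext p; congr 2; module

/-- The noise bilinear form `E[f(X) g(Y)]` for `r`-correlated standard Gaussians `X`, `Y`. -/
def Q (k : ℕ) (r : ℝ) (f g : Euc k → ℝ) : ℝ :=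
  ∫ p, f p.1 * g (r • p.1 + √(1 - r ^ 2) • p.2) ∂((gaussMeasure k).prod (gaussMeasure k))

section Q

variable {k : ℕ} {r : ℝ} {f g h : Euc k → ℝ}

lemma Bdd.pair (hf : Bdd f) (hg : Bdd g) (r : ℝ) :
    Bdd (fun p : Euc k × Euc k => f p.1 * g (r • p.1 + √(1 - r ^ 2) • p.2)) :=
  (hf.comp measurable_fst).mul
    (hg.comp (φ := fun p : Euc k × Euc k => r • p.1 + √(1 - r ^ 2) • p.2) (by fun_prop))

lemma Q_eq (hf : Bdd f) (hg : Bdd g) (r : ℝ) :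
    Q k r f g = ∫ x, f x * ouOp k r g x ∂(gaussMeasure k) := by
  rw [Q, integral_prod _ ((hf.pair hg r).integrable _)]
  simp only [integral_const_mul, ouOp]

lemma Q_symm (hf : Bdd f) (hg : Bdd g) (hr : r ^ 2 ≤ 1) : Q k r f g = Q k r g f := by
  have hs : r ^ 2 + √(1 - r ^ 2) ^ 2 = 1 := by rw [Real.sq_sqrt (by linarith)]; ring
  rw [Q, ← integral_refl hs (hf.pair hg r).1, Q]
  congr 1; ext p
  simp only
  rw [mul_comm]
  congr 2
  have : r • (r • p.1 + √(1 - r ^ 2) • p.2) + √(1 - r ^ 2) • (√(1 - r ^ 2) • p.1 - r • p.2)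
    = (r ^ 2 + √(1 - r ^ 2) ^ 2) • p.1 := by module
  rw [this, hs, one_smul]

lemma Q_add_right (hf : Bdd f) (hg : Bdd g) (hh : Bdd h) :
    Q k r f (fun x => g x + h x) = Q k r f g + Q k r f h := by
  rw [Q, Q, Q, ← integral_add ((hf.pair hg r).integrable _) ((hf.pair hh r).integrable _)]
  simp only [mul_add]

lemma Q_smul_right (c : ℝ) : Q k r f (fun x => c * g x) = c * Q k r f g := by
  rw [Q, Q, ← integral_const_mul]
  congr 1; ext p; ring

lemma Q_add_left (hf : Bdd f) (hg : Bdd g) (hh : Bdd h) :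
    Q k r (fun x => g x + h x) f = Q k r g f + Q k r h f := by
  rw [Q, Q, Q, ← integral_add ((hg.pair hf r).integrable _) ((hh.pair hf r).integrable _)]
  simp only [add_mul]

lemma Q_smul_left (c : ℝ) : Q k r (fun x => c * g x) f = c * Q k r g f := by
  rw [Q, Q, ← integral_const_mul]
  congr 1; ext p; ring

lemma Q_const_right (hf : Bdd f) : Q k r f (fun _ => 1) = ∫ x, f x ∂(gaussMeasure k) := by
  rw [Q_eq hf (Bdd.const 1)]
  simp [ouOp]

lemma Q_const_left (hf : Bdd f) (hr : r ^ 2 ≤ 1) :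
    Q k r (fun _ => 1) f = ∫ x, f x ∂(gaussMeasure k) := by
  rw [Q_symm (Bdd.const 1) hf hr, Q_const_right hf]

/-- Semigroup property of the Ornstein–Uhlenbeck operators. -/
lemma ouOp_ouOp (hg : Bdd g) {a b : ℝ} (ha : a ^ 2 ≤ 1) (hb : b ^ 2 < 1) (x : Euc k) :
    ouOp k a (ouOp k b g) x = ouOp k (a * b) g x := by
  have hab : (a * b) ^ 2 < 1 := by nlinarith [sq_nonneg a, sq_nonneg b]
  set τ := √(1 - (a * b) ^ 2) with hτ
  have hτ0 : 0 < τ := Real.sqrt_pos.2 (by linarith)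
  have hτ2 : τ ^ 2 = 1 - (a * b) ^ 2 := Real.sq_sqrt (by linarith)
  have ha2 : √(1 - a ^ 2) ^ 2 = 1 - a ^ 2 := Real.sq_sqrt (by linarith)
  have hb2 : √(1 - b ^ 2) ^ 2 = 1 - b ^ 2 := Real.sq_sqrt (by linarith)
  have hcs : (b * √(1 - a ^ 2) / τ) ^ 2 + (√(1 - b ^ 2) / τ) ^ 2 = 1 := by
    field_simp
    rw [ha2, hb2, hτ2]; ring
  have hB : Bdd (fun p : Euc k × Euc k => g ((a * b) • x + τ • p.1)) :=
    hg.comp (φ := fun p : Euc k × Euc k => (a * b) • x + τ • p.1) (by fun_prop)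
  have h1 := integral_rot hcs hB.1
  rw [integral_prod _ (hB.integrable _)] at h1
  simp only [integral_const, probReal_univ, one_smul] at h1
  simp only [ouOp]
  rw [← h1, ← integral_prod (f := fun p : Euc k × Euc k =>
    g (b • (a • x + √(1 - a ^ 2) • p.1) + √(1 - b ^ 2) • p.2))]
  · congr 1; ext p; congr 1
    simp only [smul_add, smul_smul]
    rw [mul_div_cancel₀ _ hτ0.ne', mul_div_cancel₀ _ hτ0.ne', mul_comm b a, add_assoc]
  · exact (hg.comp (φ := fun p : Euc k × Euc k =>
      b • (a • x + √(1 - a ^ 2) • p.1) + √(1 - b ^ 2) • p.2) (by fun_prop)).integrable _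

lemma Q_mul (hf : Bdd f) (hg : Bdd g) {a b : ℝ} (ha : a ^ 2 ≤ 1) (hb : b ^ 2 < 1) :
    Q k (a * b) f g = ∫ x, ouOp k a f x * ouOp k b g x ∂(gaussMeasure k) := by
  rw [Q_eq hf hg]
  simp_rw [← ouOp_ouOp hg ha hb]
  rw [← Q_eq hf (hg.ou b), Q_symm hf (hg.ou b) ha, Q_eq (hg.ou b) hf]
  simp_rw [mul_comm]

/-- By the semigroup property, `Q(r, g, g)` is the square of the `L²` norm of `T_{√r} g`. -/
lemma Q_nonneg (hg : Bdd g) (hr0 : 0 ≤ r) (hr1 : r < 1) : 0 ≤ Q k r g g := by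
  have h2 : √r ^ 2 = r := Real.sq_sqrt hr0
  rw [← Real.mul_self_sqrt hr0, Q_mul hg hg (by linarith) (by linarith)]
  exact integral_nonneg fun x => mul_self_nonneg _

/-- Logarithmic convexity of the noise stability along geometric progressions of correlations. -/
lemma Q_logconvex (hg : Bdd g) {a b : ℝ} (ha : a ^ 2 < 1) (hb : b ^ 2 < 1) :
    Q k (a * b) g g ^ 2 ≤ Q k (a * a) g g * Q k (b * b) g g := by
  have key : ∀ t : ℝ, 0 ≤ Q k (b * b) g g * (t * t) + (-2 * Q k (a * b) g g) * t
      + Q k (a * a) g g := by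
    intro t
    have hA := hg.ou a
    have hB := hg.ou b
    have e : Q k (b * b) g g * (t * t) + (-2 * Q k (a * b) g g) * t + Q k (a * a) g g
        = ∫ x, (ouOp k a g x - t * ouOp k b g x) ^ 2 ∂(gaussMeasure k) := by
      rw [Q_mul hg hg hb.le hb, Q_mul hg hg ha.le hb, Q_mul hg hg ha.le ha]
      have : ∀ x, (ouOp k a g x - t * ouOp k b g x) ^ 2
        = (t * t) * (ouOp k b g x * ouOp k b g x)
          + (-2 * t) * (ouOp k a g x * ouOp k b g x)
          + ouOp k a g x * ouOp k a g x := fun x => by ring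
      simp_rw [this]
      rw [integral_add, integral_add, integral_const_mul, integral_const_mul]
      · ring
      · exact ((hB.mul hB).smul _).integrable _
      · exact ((hA.mul hB).smul _).integrable _
      · exact (((hB.mul hB).smul _).add ((hA.mul hB).smul _)).integrable _
      · exact (hA.mul hA).integrable _
    rw [e]
    exact integral_nonneg fun x => sq_nonneg _
  have := discrim_le_zero key
  rw [discrim] at this
  nlinarith

end Q

/-! ### Small correlations and the degree-two spectral gap -/

section SmallCorrelation

variable {k : ℕ}

lemma gaussDensity_nonneg (x : Euc k) : 0 ≤ gaussDensity k x := by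
  unfold gaussDensity; positivity

lemma measurable_gaussDensity : Measurable (gaussDensity k) := by
  unfold gaussDensity; fun_prop

lemma integral_gauss (F : Euc k → ℝ) :
    ∫ x, F x ∂(gaussMeasure k) = ∫ x, gaussDensity k x * F x := by
  rw [gaussMeasure, integral_withDensity_eq_integral_toReal_smul
    measurable_gaussDensity.ennreal_ofReal (by simp)]
  simp_rw [ENNReal.toReal_ofReal (gaussDensity_nonneg _), smul_eq_mul]

lemma integrable_exp_gauss :
    Integrable (fun x : Euc k => Real.exp (‖x‖ ^ 2 / 8)) (gaussMeasure k) := by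
  rw [gaussMeasure, integrable_withDensity_iff_integrable_smul'
    measurable_gaussDensity.ennreal_ofReal (by simp)]
  have := (GaussianFourier.integrable_cexp_neg_mul_sq_norm_add (V := Euc k) (b := (3/8 : ℂ))
      (by norm_num) 0 0).norm.const_mul ((2 * π) ^ (-(k : ℝ) / 2))
  refine this.congr (Eventually.of_forall fun x => ?_)
  simp only [ENNReal.toReal_ofReal (gaussDensity_nonneg x), smul_eq_mul]
  rw [gaussDensity, mul_assoc, ← Real.exp_add, Complex.norm_exp]
  congr 2
  simp [← Complex.ofReal_pow]
  ring

/-- The Mehler kernel of the Ornstein–Uhlenbeck operator. -/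
lemma ouOp_mehler (g : Euc k → ℝ) {r : ℝ} (hr : r ^ 2 < 1) (x : Euc k) :
    ouOp k r g x = (√(1 - r ^ 2))⁻¹ ^ k * ∫ w, g w *
      Real.exp ((2 * r * ⟪x, w⟫ - r ^ 2 * (‖x‖ ^ 2 + ‖w‖ ^ 2)) / (2 * (1 - r ^ 2)))
      ∂(gaussMeasure k) := by
  set σ := √(1 - r ^ 2) with hσ
  have hσ0 : 0 < σ := Real.sqrt_pos.2 (by linarith)
  have hσ2 : σ ^ 2 = 1 - r ^ 2 := Real.sq_sqrt (by linarith)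
  set F : Euc k → ℝ := fun w => gaussDensity k (σ⁻¹ • (w - r • x)) * g w with hF
  have h1 : ouOp k r g x = ∫ y, F (r • x + σ • y) := by
    rw [ouOp, integral_gauss]
    congr 1; ext y
    simp only [hF, add_sub_cancel_left, smul_smul, inv_mul_cancel₀ hσ0.ne', one_smul]
    rw [hσ]
  rw [h1, Measure.integral_comp_smul volume (fun y => F (r • x + y)) σ,
    integral_add_left_eq_self F (r • x), integral_gauss, smul_eq_mul]
  congr 1
  · rw [finrank_euclideanSpace_fin, abs_of_pos (by positivity), inv_pow]
  · congr 1; ext w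
    simp only [hF, gaussDensity, norm_smul, mul_pow, norm_inv, inv_pow, Real.norm_eq_abs, sq_abs]
    rw [mul_comm (g w), mul_assoc, mul_assoc, ← mul_assoc (Real.exp _) (Real.exp _), ← Real.exp_add]
    congr 3
    rw [@norm_sub_sq_real, hσ2, norm_smul, mul_pow, Real.norm_eq_abs, sq_abs, inner_smul_right,
      real_inner_comm]
    have : 1 - r ^ 2 ≠ 0 := by linarith
    field_simp
    ring

/-- Second-order Taylor bound for the exponent of the Mehler kernel, with `p` in the role of `⟪x, w⟫`
and `S` in the role of `‖x‖² + ‖w‖²`. The prefactor `S²` of the quadratic remainder is absorbed into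
the exponential. -/
lemma exp_sub_bound {r p S : ℝ} (hr0 : 0 < r) (hr : r ≤ 1 / 32) (hS : 0 ≤ S) (hp : |p| ≤ S / 2) :
    |Real.exp ((2 * r * p - r ^ 2 * S) / (2 * (1 - r ^ 2))) - 1 - r / (1 - r ^ 2) * p|
      ≤ 2064 * r ^ 2 * Real.exp (S / 8) := by
  have hσ : 1 / 2 ≤ 1 - r ^ 2 := by nlinarith
  have hσ0 : 0 < 1 - r ^ 2 := by linarith
  set u := (2 * r * p - r ^ 2 * S) / (2 * (1 - r ^ 2)) with hu
  have hu' : u = r / (1 - r ^ 2) * p - r ^ 2 * S / (2 * (1 - r ^ 2)) := by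
    rw [hu]; field_simp
  have hpp := abs_le.1 hp
  have hu1 : |u| ≤ 2 * r * S := by
    rw [hu, abs_div, abs_of_pos (by linarith : 0 < 2 * (1 - r ^ 2)), div_le_iff₀ (by linarith)]
    have h1 : |2 * r * p - r ^ 2 * S| ≤ 2 * r * S := by
      rw [abs_le]; constructor <;> nlinarith [mul_nonneg hr0.le hS, mul_le_mul_of_nonneg_left hr (mul_nonneg hr0.le hS)]
    nlinarith [mul_nonneg hr0.le hS]
  have hE : Real.exp u - 1 - u ≤ u ^ 2 * Real.exp |u| ∧ -(u ^ 2 * Real.exp |u|) ≤ Real.exp u - 1 - u := by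
    have h0 := Real.add_one_le_exp u
    have h00 := Real.add_one_le_exp (-u)
    refine ⟨?_, by nlinarith [mul_nonneg (sq_nonneg u) (Real.exp_pos |u|).le]⟩
    rcases le_total 0 u with h | h
    · rw [abs_of_nonneg h]
      -- `1 - exp (-u) ≤ u` gives `exp u - 1 ≤ u exp u`
      have h3 : Real.exp u * Real.exp (-u) = 1 := by rw [← Real.exp_add]; simp
      have h4 : Real.exp u - 1 ≤ u * Real.exp u := by nlinarith [Real.exp_pos u]
      nlinarith
    · have h5 : 1 ≤ Real.exp |u| := Real.one_le_exp (abs_nonneg _)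
      have h3 : Real.exp u * Real.exp (-u) = 1 := by rw [← Real.exp_add]; simp
      have h4 : Real.exp u * (1 - u) ≤ 1 := by nlinarith [Real.exp_pos u]
      have h6 : Real.exp u - 1 - u ≤ u ^ 2 := by
        have : (Real.exp u - 1 - u) * (1 - u) ≤ u ^ 2 * (1 - u) := by nlinarith [sq_nonneg u]
        exact le_of_mul_le_mul_right this (by linarith)
      nlinarith [sq_nonneg u]
  have h16 : Real.exp |u| ≤ Real.exp (S / 16) := Real.exp_le_exp.2 (by nlinarith)
  have hS2 : S ^ 2 ≤ 512 * Real.exp (S / 16) := by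
    have := Real.quadratic_le_exp_of_nonneg (x := S / 16) (by linarith)
    nlinarith
  have hS1 : S ≤ 16 * Real.exp (S / 16) := by
    have := Real.add_one_le_exp (S / 16)
    linarith
  have hE8 : Real.exp (S / 8) = Real.exp (S / 16) * Real.exp (S / 16) := by
    rw [← Real.exp_add]; ring_nf
  have h1E : 1 ≤ Real.exp (S / 16) := Real.one_le_exp (by linarith)
  have hu2 : u ^ 2 ≤ 4 * r ^ 2 * S ^ 2 := by
    have := pow_le_pow_left₀ (abs_nonneg u) hu1 2
    rw [sq_abs] at this; nlinarith
  have hA : u ^ 2 * Real.exp |u| ≤ 2048 * r ^ 2 * Real.exp (S / 8) := by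
    calc u ^ 2 * Real.exp |u| ≤ (4 * r ^ 2 * (512 * Real.exp (S / 16))) * Real.exp (S / 16) := by
          gcongr
          exact hu2.trans (by gcongr)
      _ = _ := by rw [hE8]; ring
  have hB : r ^ 2 * S / (2 * (1 - r ^ 2)) ≤ 16 * r ^ 2 * Real.exp (S / 8) := by
    rw [div_le_iff₀ (by linarith)]
    have : S ≤ 16 * Real.exp (S / 8) := by rw [hE8]; nlinarith
    have h2 : r ^ 2 * S ≤ 16 * r ^ 2 * Real.exp (S / 8) := by nlinarith [sq_nonneg r]
    have h3 : 0 ≤ 16 * r ^ 2 * Real.exp (S / 8) := by positivity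
    nlinarith
  have hB0 : 0 ≤ r ^ 2 * S / (2 * (1 - r ^ 2)) := by positivity
  rw [abs_le]
  constructor <;> linarith [hE.1, hE.2]

/-- The zeroth and first order terms of the Mehler kernel integrate to zero against `g`, so only the
remainder of order `r²` contributes. -/
lemma ouOp_small {g : Euc k → ℝ} (hg : Measurable g) {M : ℝ} (hM : ∀ x, |g x| ≤ M)
    (h0 : ∫ x, g x ∂(gaussMeasure k) = 0)
    (h1 : ∀ v, ∫ x, g x * ⟪v, x⟫ ∂(gaussMeasure k) = 0)
    {r : ℝ} (hr0 : 0 < r) (hr : r ≤ 1 / 32) (x : Euc k) :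
    |ouOp k r g x| ≤ 2 ^ k * (M * 2064 * (∫ w, Real.exp (‖w‖ ^ 2 / 8) ∂(gaussMeasure k)) *
      r ^ 2 * Real.exp (‖x‖ ^ 2 / 8)) := by
  have hσ : 1 / 2 ≤ 1 - r ^ 2 := by nlinarith
  have hσ0 : 0 < 1 - r ^ 2 := by linarith
  have hM0 : 0 ≤ M := (abs_nonneg _).trans (hM 0)
  have hgi : Integrable g (gaussMeasure k) := Bdd.integrable ⟨hg, M, hM⟩ _
  have hid : Integrable (fun w : Euc k => ⟪x, w⟫) (gaussMeasure k) :=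
    (innerSL ℝ x).integrable_comp (IsGaussian.integrable_id (μ := gaussMeasure k))
  have hgx : Integrable (fun w => g w * ⟪x, w⟫) (gaussMeasure k) :=
    hid.bdd_mul hg.aestronglyMeasurable (Eventually.of_forall hM)
  set E : Euc k → ℝ := fun w =>
    Real.exp ((2 * r * ⟪x, w⟫ - r ^ 2 * (‖x‖ ^ 2 + ‖w‖ ^ 2)) / (2 * (1 - r ^ 2))) with hE
  have hb : ∀ w, |g w * (E w - 1 - r / (1 - r ^ 2) * ⟪x, w⟫)|
      ≤ M * (2064 * r ^ 2 * (Real.exp (‖x‖ ^ 2 / 8) * Real.exp (‖w‖ ^ 2 / 8))) := by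
    intro w
    rw [abs_mul]
    refine mul_le_mul (hM w) ?_ (abs_nonneg _) hM0
    rw [← Real.exp_add, ← add_div]
    refine exp_sub_bound hr0 hr (by positivity) ?_
    have := abs_real_inner_le_norm x w
    nlinarith [sq_nonneg (‖x‖ - ‖w‖)]
  have hbi : Integrable (fun w : Euc k => M * (2064 * r ^ 2 * (Real.exp (‖x‖ ^ 2 / 8) *
      Real.exp (‖w‖ ^ 2 / 8)))) (gaussMeasure k) :=
    ((integrable_exp_gauss.const_mul _).const_mul _).const_mul _
  have hmE : Measurable E := by fun_prop
  have hi : Integrable (fun w => g w * (E w - 1 - r / (1 - r ^ 2) * ⟪x, w⟫)) (gaussMeasure k) :=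
    hbi.mono' (by fun_prop) (Eventually.of_forall hb)
  have e : ∫ w, g w * E w ∂(gaussMeasure k)
      = ∫ w, g w * (E w - 1 - r / (1 - r ^ 2) * ⟪x, w⟫) ∂(gaussMeasure k) := by
    have : ∀ w, g w * E w = g w * (E w - 1 - r / (1 - r ^ 2) * ⟪x, w⟫) + (g w
      + r / (1 - r ^ 2) * (g w * ⟪x, w⟫)) := fun w => by ring
    simp_rw [this]
    have hgx' := hgx.const_mul (r / (1 - r ^ 2))
    have e2 := integral_add hgi hgx'
    rw [integral_const_mul, h0, h1] at e2
    have e3 := integral_add hi (hgi.add hgx')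
    simp only [Pi.add_apply] at e3
    rw [e3, e2]
    simp
  rw [ouOp_mehler g (by linarith) x, e, abs_mul]
  refine mul_le_mul ?_ ?_ (abs_nonneg _) (by positivity)
  · rw [abs_pow]
    refine pow_le_pow_left₀ (abs_nonneg _) ?_ k
    rw [abs_inv, abs_of_nonneg (Real.sqrt_nonneg _)]
    refine inv_le_of_inv_le₀ (by norm_num) ?_
    exact Real.le_sqrt_of_sq_le (by linarith)
  · refine (abs_integral_le_integral_abs).trans ?_
    refine (integral_mono hi.abs hbi hb).trans (le_of_eq ?_)
    rw [integral_const_mul, integral_const_mul, integral_const_mul]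
    ring

/-- A bounded function orthogonal to constants and to linear functions has noise stability
`O(r²)` as the correlation `r` tends to `0`. -/
lemma Q_small {g : Euc k → ℝ} (hg : Bdd g)
    (h0 : ∫ x, g x ∂(gaussMeasure k) = 0)
    (h1 : ∀ v, ∫ x, g x * ⟪v, x⟫ ∂(gaussMeasure k) = 0) :
    ∃ C, ∀ r, 0 < r → r ≤ 1 / 32 → Q k r g g ≤ C * r ^ 2 := by
  obtain ⟨hgm, M, hM⟩ := id hg
  have hM0 : 0 ≤ M := (abs_nonneg _).trans (hM 0)
  set K := ∫ w, Real.exp (‖w‖ ^ 2 / 8) ∂(gaussMeasure k) with hK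
  refine ⟨M * (2 ^ k * (M * 2064 * K)) * K, fun r hr0 hr => ?_⟩
  rw [Q_eq hg hg]
  calc ∫ x, g x * ouOp k r g x ∂(gaussMeasure k)
      ≤ ∫ x, M * (2 ^ k * (M * 2064 * K * r ^ 2)) * Real.exp (‖x‖ ^ 2 / 8) ∂(gaussMeasure k) := by
        refine integral_mono ((hg.mul (hg.ou r)).integrable _)
          (integrable_exp_gauss.const_mul _) fun x => ?_
        refine (le_abs_self _).trans ?_
        simp only
        rw [abs_mul, mul_assoc]
        refine mul_le_mul (hM x) ?_ (abs_nonneg _) hM0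
        refine (ouOp_small hgm hM h0 h1 hr0 hr x).trans (le_of_eq ?_)
        rw [← hK]; ring
    _ = _ := by rw [integral_const_mul, ← hK]; ring

/-- Spectral gap at degree two: if `g` is orthogonal to constants and to linear functions, then
`r ↦ r⁻² Q(r, g, g)` is nondecreasing. The sequence `bⱼ = Q(r' qʲ, g, g)` with `q = r / r'` is
logarithmically convex and `O(q²ʲ)`, so its ratios, which are nondecreasing, are at most `q²`. -/
lemma Q_gap {g : Euc k → ℝ} (hg : Bdd g)
    (h0 : ∫ x, g x ∂(gaussMeasure k) = 0)
    (h1 : ∀ v, ∫ x, g x * ⟪v, x⟫ ∂(gaussMeasure k) = 0)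
    {r r' : ℝ} (hr0 : 0 < r) (hrr : r < r') (hr1 : r' < 1) :
    Q k r g g ≤ (r / r') ^ 2 * Q k r' g g := by
  have hr'0 : 0 < r' := hr0.trans hrr
  set q := r / r' with hq
  have hq0 : 0 < q := by positivity
  have hq1 : q < 1 := (div_lt_one hr'0).2 hrr
  set b : ℕ → ℝ := fun j => Q k (r' * q ^ j) g g with hb
  have hlt : ∀ j, r' * q ^ j < 1 := fun j =>
    (mul_le_of_le_one_right hr'0.le (pow_le_one₀ hq0.le hq1.le)).trans_lt hr1
  have hpos : ∀ j, 0 < r' * q ^ j := fun j => by positivity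
  have hb0 : ∀ j, 0 ≤ b j := fun j => Q_nonneg hg (hpos j).le (hlt j)
  have hlc : ∀ j, b (j + 1) ^ 2 ≤ b j * b (j + 2) := by
    intro j
    have s1 := Real.sq_sqrt (hpos j).le
    have s2 := Real.sq_sqrt (hpos (j + 2)).le
    have := Q_logconvex hg (a := √(r' * q ^ j)) (b := √(r' * q ^ (j + 2)))
      (by rw [s1]; exact hlt j) (by rw [s2]; exact hlt _)
    rw [← sq, s1, ← sq, s2, ← Real.sqrt_mul (hpos j).le] at this
    have e : r' * q ^ j * (r' * q ^ (j + 2)) = (r' * q ^ (j + 1)) ^ 2 := by ring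
    rwa [e, Real.sqrt_sq (hpos _).le] at this
  obtain ⟨C, hC⟩ := Q_small hg h0 h1
  have e1 : b 1 = Q k r g g := by
    simp only [hb, pow_one, hq]; rw [mul_div_cancel₀ _ hr'0.ne']
  have e0 : b 0 = Q k r' g g := by simp [hb]
  rw [← e1, ← e0]
  by_contra! hcon
  have hb0' : 0 < b 0 := by
    rcases (hb0 0).lt_or_eq with h | h
    · exact h
    · have := hlc 0
      rw [← h] at this hcon
      simp only [zero_add, zero_mul, mul_zero] at this hcon
      nlinarith
  set t := b 1 / b 0 with ht
  have htq : q ^ 2 < t := by rw [ht, lt_div_iff₀ hb0']; exact hcon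
  have ht0 : 0 < t := (by positivity : 0 < q ^ 2).trans htq
  -- the ratios of consecutive terms never drop below the first one
  have hratio : ∀ j, 0 < b j ∧ t * b j ≤ b (j + 1) := by
    intro j
    induction j with
    | zero => exact ⟨hb0', by rw [ht, div_mul_cancel₀ _ hb0'.ne']⟩
    | succ j ih =>
      have hp : 0 < b (j + 1) := (mul_pos ht0 ih.1).trans_le ih.2
      refine ⟨hp, ?_⟩
      have := hlc j
      have h3 : t * b j * b (j + 1) ≤ b j * b (j + 2) := by nlinarith
      have : b j * (t * b (j + 1)) ≤ b j * b (j + 2) := by linarith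
      exact le_of_mul_le_mul_left this ih.1
  have hgeo : ∀ j, t ^ j * b 0 ≤ b j := by
    intro j
    induction j with
    | zero => simp
    | succ j ih =>
      calc t ^ (j + 1) * b 0 = t * (t ^ j * b 0) := by ring
        _ ≤ t * b j := by gcongr
        _ ≤ _ := (hratio j).2
  have hsm : ∀ᶠ j : ℕ in atTop, r' * q ^ j ≤ 1 / 32 := by
    have : Tendsto (fun j : ℕ => r' * q ^ j) atTop (nhds (r' * 0)) :=
      (tendsto_pow_atTop_nhds_zero_of_lt_one hq0.le hq1).const_mul _
    rw [mul_zero] at this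
    exact this.eventually (ge_mem_nhds (by norm_num))
  have hbig : Tendsto (fun j : ℕ => (t / q ^ 2) ^ j) atTop atTop :=
    tendsto_pow_atTop_atTop_of_one_lt ((one_lt_div (by positivity)).2 htq)
  obtain ⟨j, hj1, hj2⟩ := (hsm.and (hbig.eventually_gt_atTop (C * r' ^ 2 / b 0))).exists
  have h5 := (hgeo j).trans (hC _ (hpos j) hj1)
  rw [div_lt_iff₀ hb0', div_pow, div_mul_eq_mul_div, lt_div_iff₀ (by positivity)] at hj2
  have e : C * (r' * q ^ j) ^ 2 = C * r' ^ 2 * (q ^ 2) ^ j := by ring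
  rw [e] at h5
  linarith

end SmallCorrelation

/-! ### The real-variable bootstrap -/

set_option maxHeartbeats 400000 in
/-- The real-variable part of the argument. The functions `D` and `B` of the correlation stand for
the noise stability deficit and for the reference functional; `r / √(1 - r ^ 2)` is the cotangent
of the angle whose cosine is `r`, and `2 * r ^ 2 - 1` is the cosine of twice that angle.

At angle `π / 4` the doubled angle is `π / 2`, where the deficit vanishes, so `D ≥ 0` there; `hgap`
carries this to small correlations as `D ≥ c B`. Halving the angle brings the bound back to an angle
below `π / 4`, from which `hgap` covers all larger angles, and repeated halving reaches every
correlation below `1`. Since `B r` grows at most like `κ(r) = r / √(1 - r ^ 2)`, each halving costs a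
bounded factor, which `(1 - r ^ 2) ^ 2` absorbs. -/
lemma bootstrap {D B : ℝ → ℝ}
    (hdouble : ∀ r, 0 < r → r < 1 → D (2 * r ^ 2 - 1) ≤ 2 * D r)
    (hD0 : D 0 = 0)
    (hgap : ∀ r r', 0 < r → r ≤ r' → r' < 1 →
      (r / r') ^ 2 * D r' + B r - (r / r') ^ 2 * B r' ≤ D r)
    (hB : ∀ r r', 0 < r → r ≤ r' → r' < 1 →
      r / √(1 - r ^ 2) * B r' ≤ r' / √(1 - r' ^ 2) * B r)
    (hB0 : ∀ r, 0 < r → r < 1 → 0 ≤ B r) {r : ℝ} (hr0 : 0 < r) (hr1 : r < 1) :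
    9 / 4000 * (1 - r ^ 2) ^ 2 * B r ≤ D r := by
  have hy : ∀ r : ℝ, 0 < r → r < 1 → 0 < √(1 - r ^ 2) ∧ √(1 - r ^ 2) ^ 2 = 1 - r ^ 2 := by
    intro r h0 h1
    have : 0 < 1 - r ^ 2 := by nlinarith
    exact ⟨Real.sqrt_pos.2 this, Real.sq_sqrt this.le⟩
  -- the angle `π / 4`
  obtain ⟨r₀, hr₀0, hr₀2⟩ : ∃ x : ℝ, 0 < x ∧ x ^ 2 = 1 / 2 :=
    ⟨√(1 / 2), by positivity, Real.sq_sqrt (by norm_num)⟩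
  have hr₀1 : r₀ < 1 := by nlinarith
  have hr₀9 : 9 / 41 < r₀ := by nlinarith
  have hκ₀ : r₀ / √(1 - r₀ ^ 2) = 1 := by
    have : √(1 - r₀ ^ 2) = r₀ := by
      rw [show 1 - r₀ ^ 2 = r₀ ^ 2 by linarith, Real.sqrt_sq hr₀0.le]
    rw [this, div_self hr₀0.ne']
  have hDr₀ : 0 ≤ D r₀ := by
    have := hdouble r₀ hr₀0 hr₀1
    rw [show 2 * r₀ ^ 2 - 1 = 0 by linarith, hD0] at this
    linarith
  have step1 : ∀ r, 0 < r → r ≤ 9 / 41 → 961 / 1681 * B r ≤ D r := by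
    intro r h0 h1
    obtain ⟨y0, y2⟩ := hy r h0 (by linarith)
    set y := √(1 - r ^ 2)
    have g := hgap r r₀ h0 (by linarith) hr₀1
    have b := hB r r₀ h0 (by linarith) hr₀1
    rw [hκ₀, one_mul, div_mul_eq_mul_div, div_le_iff₀ y0] at b
    rw [div_pow, hr₀2] at g
    have b0 := hB0 r h0 (by linarith)
    have hry : r * y ≤ 360 / 1681 := by
      refine abs_le_of_sq_le_sq' ?_ (by norm_num) |>.2
      have hr2 : r ^ 2 ≤ 81 / 1681 := by nlinarith
      rw [mul_pow, y2]; nlinarith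
    have e1 : r ^ 2 * B r₀ ≤ r * y * B r :=
      calc r ^ 2 * B r₀ = r * (r * B r₀) := by ring
        _ ≤ r * (B r * y) := by gcongr
        _ = _ := by ring
    have e2 : r * y * B r ≤ 360 / 1681 * B r := by gcongr
    have e3 : 0 ≤ r ^ 2 * D r₀ := by positivity
    have : r ^ 2 / (1 / 2) = 2 * r ^ 2 := by ring
    rw [this] at g
    linarith
  -- the angle slightly below `π / 4` whose tangent is `4 / 5`; the cosine of its double is `9 / 41`
  obtain ⟨r₁, hr₁0, hr₁2⟩ : ∃ x : ℝ, 0 < x ∧ x ^ 2 = 25 / 41 :=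
    ⟨√(25 / 41), by positivity, Real.sq_sqrt (by norm_num)⟩
  have hr₁1 : r₁ < 1 := by nlinarith
  have hr₁3 : 3 / 4 ≤ r₁ := by nlinarith
  have hr₁9 : 9 / 41 < r₁ := by linarith
  have hκ₁ : r₁ / √(1 - r₁ ^ 2) = 5 / 4 := by
    have : √(1 - r₁ ^ 2) = 4 / 5 * r₁ := by
      rw [show 1 - r₁ ^ 2 = (4 / 5 * r₁) ^ 2 by rw [mul_pow, hr₁2]; norm_num,
        Real.sqrt_sq (by positivity)]
    rw [this]; field_simp
  have hκ₂ : (9 / 41 : ℝ) / √(1 - (9 / 41) ^ 2) = 9 / 40 := by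
    have : √(1 - (9 / 41 : ℝ) ^ 2) = 40 / 41 := by
      rw [show (1 - (9 / 41 : ℝ) ^ 2) = (40 / 41) ^ 2 by norm_num, Real.sqrt_sq (by norm_num)]
    rw [this]; norm_num
  have hDr₁ : 961 / 3362 * B (9 / 41) ≤ D r₁ := by
    have := hdouble r₁ hr₁0 hr₁1
    rw [show 2 * r₁ ^ 2 - 1 = 9 / 41 by rw [hr₁2]; norm_num] at this
    have h2 := step1 (9 / 41) (by norm_num) le_rfl
    linarith
  have step2 : ∀ r, 0 < r → r ≤ r₁ → 1 / 40 * B r ≤ D r := by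
    intro r h0 h1
    have b0 := hB0 r h0 (by linarith)
    rcases le_total r (9 / 41) with h2 | h2
    · have := step1 r h0 h2
      linarith
    obtain ⟨y0, y2⟩ := hy r h0 (by linarith)
    have g := hgap r r₁ h0 h1 hr₁1
    have b1 := hB r r₁ h0 h1 hr₁1
    have b2 := hB (9 / 41) r (by norm_num) h2 (by linarith)
    set y := √(1 - r ^ 2)
    rw [hκ₁, div_mul_eq_mul_div, div_le_iff₀ y0] at b1
    rw [hκ₂, div_mul_eq_mul_div r, le_div_iff₀ y0] at b2
    rw [div_pow, hr₁2] at g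
    have hry : r * y ≤ 1 / 2 := by linarith [two_mul_le_add_sq r y]
    have e1 : r ^ 2 * B r₁ ≤ 5 / 4 * (r * y * B r) :=
      calc r ^ 2 * B r₁ = r * (r * B r₁) := by ring
        _ ≤ r * (5 / 4 * B r * y) := by gcongr
        _ = _ := by ring
    have e2 : 9 / 40 * (r * y * B r) ≤ r ^ 2 * B (9 / 41) :=
      calc 9 / 40 * (r * y * B r) = r * (9 / 40 * B r * y) := by ring
        _ ≤ r * (r * B (9 / 41)) := by gcongr
        _ = _ := by ring
    have e3 : r ^ 2 * (961 / 3362 * B (9 / 41)) ≤ r ^ 2 * D r₁ := by gcongr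
    have e4 : r * y * B r ≤ 1 / 2 * B r := by gcongr
    have : r ^ 2 / (25 / 41) = 41 / 25 * r ^ 2 := by ring
    rw [this] at g
    linarith
  have main : ∀ n : ℕ, ∀ r, 0 < r → r < 1 → 1 - r₁ ≤ 2 ^ n * (1 - r) →
      9 / 4000 * (1 - r ^ 2) ^ 2 * B r ≤ D r := by
    intro n
    induction n with
    | zero =>
      intro r h0 h1 h
      have b0 := hB0 r h0 h1
      have s := step2 r h0 (by linarith)
      have : (1 - r ^ 2) ^ 2 ≤ 1 := by
        refine pow_le_one₀ ?_ (by linarith [sq_nonneg r])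
        linarith [pow_le_one₀ (n := 2) h0.le h1.le]
      have : (1 - r ^ 2) ^ 2 * B r ≤ 1 * B r := by gcongr
      linarith
    | succ n ih =>
      intro r h0 h1 h
      have b0 := hB0 r h0 h1
      have h01 : (1 - r ^ 2) ^ 2 ≤ 1 := by
        refine pow_le_one₀ ?_ (by linarith [sq_nonneg r])
        linarith [pow_le_one₀ (n := 2) h0.le h1.le]
      have h01' : (1 - r ^ 2) ^ 2 * B r ≤ 1 * B r := by gcongr
      rcases le_or_gt r r₁ with hr | hr
      · have s := step2 r h0 hr
        linarith
      obtain ⟨y0, y2⟩ := hy r h0 h1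
      have hrsq : 25 / 41 < r ^ 2 := by
        rw [← hr₁2]; gcongr
      set q := 2 * r ^ 2 - 1 with hq
      have hq0 : 0 < q := by linarith
      have hqr : q ≤ r := by
        have : 0 ≤ (1 - r) * (2 * r + 1) := mul_nonneg (by linarith) (by linarith)
        linarith
      have hd : D q ≤ 2 * D r := hdouble r h0 h1
      have b := hB q r hq0 hqr h1
      have hs : √(1 - q ^ 2) = 2 * r * √(1 - r ^ 2) := by
        rw [show 1 - q ^ 2 = (2 * r * √(1 - r ^ 2)) ^ 2 by rw [mul_pow, y2, hq]; ring,
          Real.sqrt_sq (by positivity)]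
      have bq0 := hB0 q hq0 (by linarith)
      have hbq : q * B r ≤ 2 * r ^ 2 * B q := by
        rw [hs, div_mul_eq_mul_div, div_mul_eq_mul_div, div_le_div_iff₀ (by positivity) y0] at b
        have : √(1 - r ^ 2) * (q * B r) ≤ √(1 - r ^ 2) * (2 * r ^ 2 * B q) := by linarith
        exact le_of_mul_le_mul_left this y0
      rcases le_or_gt q r₁ with hqr₁ | hqr₁
      · have s := step2 q hq0 hqr₁
        have h3 : (1 + q) * (9 / 50 * B r) ≤ (1 + q) * B q :=
          calc (1 + q) * (9 / 50 * B r) = 9 / 50 * (1 + q) * B r := by ring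
            _ ≤ q * B r := by gcongr; linarith
            _ ≤ 2 * r ^ 2 * B q := hbq
            _ = (1 + q) * B q := by rw [hq]; ring
        have := le_of_mul_le_mul_left h3 (by linarith)
        linarith
      · have hq1 : q < 1 := by linarith
        have s := ih q hq0 hq1 (by
          have : 2 * (1 - r) ≤ 1 - q := by
            have : 0 ≤ r * (1 - r) := mul_nonneg h0.le (by linarith)
            linarith
          calc 1 - r₁ ≤ 2 ^ n * (2 * (1 - r)) := by rw [← mul_assoc, ← pow_succ]; exact h
            _ ≤ _ := by gcongr)
        have e : (1 - q ^ 2) ^ 2 = 16 * r ^ 4 * (1 - r ^ 2) ^ 2 := by rw [hq]; ring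
        rw [e] at s
        set A := (1 - r ^ 2) ^ 2 with hA
        have hA0 : 0 ≤ A := sq_nonneg _
        have hq3 : 3 / 4 ≤ q := by linarith
        have hr4 : 3 / 4 ≤ r ^ 2 := by linarith
        have k1 : A * (r ^ 2 * (q * B r)) ≤ A * (r ^ 2 * (2 * r ^ 2 * B q)) := by gcongr
        have k2 : 1 / 4 ≤ r ^ 2 * q :=
          le_trans (by norm_num) (mul_le_mul hr4 hq3 (by norm_num) (sq_nonneg r))
        have k3 : 1 / 4 * (A * B r) ≤ r ^ 2 * q * (A * B r) := by gcongr
        have k4 : r ^ 2 * q * (A * B r) ≤ 2 * (r ^ 4 * A * B q) :=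
          calc _ = A * (r ^ 2 * (q * B r)) := by ring
            _ ≤ _ := k1
            _ = _ := by ring
        have k5 : 9 / 4000 * (16 * r ^ 4 * A) * B q = 9 / 250 * (r ^ 4 * A * B q) := by ring
        rw [k5] at s
        have k6 : 9 / 4000 * A * B r = 9 / 4000 * (A * B r) := by ring
        rw [k6]
        linarith
  obtain ⟨n, hn⟩ := pow_unbounded_of_one_lt (1 / (1 - r)) (one_lt_two (α := ℝ))
  refine main n r hr0 hr1 ?_
  rw [div_lt_iff₀ (by linarith)] at hn
  linarith

/-! ### The centred Gaussian distribution function -/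

/-- The centred Gaussian distribution function. -/
def cPhi (t : ℝ) : ℝ := Phi t - 1 / 2

/-- The density in `Phi` is that of `gaussianReal 0 1`. -/
lemma phi_density (s : ℝ) :
    (2 * π) ^ (-(1 : ℝ) / 2) * Real.exp (-s ^ 2 / 2) = gaussianPDFReal 0 1 s := by
  rw [gaussianPDFReal]
  congr 1
  · rw [Real.sqrt_eq_rpow, ← Real.rpow_neg (by positivity)]
    norm_num
  · simp

lemma Phi_eq_real (t : ℝ) : Phi t = (gaussianReal 0 1).real (Iio t) := by
  rw [Phi, measureReal_def, gaussianReal_apply_eq_integral _ one_ne_zero,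
    ENNReal.toReal_ofReal (integral_nonneg fun s => gaussianPDFReal_nonneg _ _ _)]
  simp_rw [phi_density]

lemma Phi_neg (t : ℝ) : Phi (-t) = 1 - Phi t := by
  have h : (gaussianReal 0 1).map (fun x => -x) = gaussianReal 0 1 := by
    rw [gaussianReal_map_neg, neg_zero]
  rw [Phi_eq_real, Phi_eq_real]
  nth_rewrite 1 [← h]
  rw [map_measureReal_apply measurable_neg measurableSet_Iio]
  have e : (fun x : ℝ => -x) ⁻¹' Iio (-t) = (Iic t)ᶜ := by ext x; simp
  rw [e, probReal_compl_eq_one_sub measurableSet_Iic]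
  congr 1
  have := nullSingletonClass_gaussianReal (μ := 0) (v := 1) one_ne_zero
  exact measureReal_congr Iio_ae_eq_Iic.symm

lemma cPhi_neg (t : ℝ) : cPhi (-t) = -cPhi t := by rw [cPhi, cPhi, Phi_neg]; ring

lemma cPhi_zero : cPhi 0 = 0 := by
  have := cPhi_neg 0
  rw [neg_zero] at this
  linarith

lemma integrable_phi : Integrable (gaussianPDFReal 0 1) := integrable_gaussianPDFReal 0 1

lemma cPhi_eq_integral (t : ℝ) : cPhi t = ∫ s in (0 : ℝ)..t, gaussianPDFReal 0 1 s := by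
  have h : ∀ t, Phi t = ∫ s in Iic t, gaussianPDFReal 0 1 s := fun t => by
    rw [Phi, integral_Iic_eq_integral_Iio]; simp_rw [phi_density]
  have h0 : Phi 0 = 1 / 2 := by
    have := cPhi_zero
    rw [cPhi] at this
    linarith
  rw [cPhi, ← h0, h, h, intervalIntegral.integral_Iic_sub_Iic integrable_phi.integrableOn
    integrable_phi.integrableOn]

lemma cPhi_pos {t : ℝ} (ht : 0 < t) : 0 < cPhi t := by
  rw [cPhi_eq_integral]
  exact intervalIntegral.intervalIntegral_pos_of_pos integrable_phi.intervalIntegrable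
    (fun x => gaussianPDFReal_pos _ _ _ one_ne_zero) ht

lemma cPhi_nonneg {t : ℝ} (ht : 0 ≤ t) : 0 ≤ cPhi t := by
  rcases ht.eq_or_lt with rfl | h
  · rw [cPhi_zero]
  · exact (cPhi_pos h).le

lemma bdd_cPhi : Bdd cPhi := by
  have hm : Measurable Phi := by
    refine Monotone.measurable fun s t hst => ?_
    rw [Phi_eq_real, Phi_eq_real]
    exact measureReal_mono (Iio_subset_Iio hst)
  refine ⟨hm.sub_const _, 1, fun t => ?_⟩
  have h0 : 0 ≤ Phi t := by rw [Phi_eq_real]; exact measureReal_nonneg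
  have h1 : Phi t ≤ 1 := by rw [Phi_eq_real]; exact measureReal_le_one
  rw [cPhi, abs_le]
  constructor <;> linarith

/-- Concavity of the centred distribution function on the half line, in the form
`Φ₀(κ' t) / κ' ≤ Φ₀(κ t) / κ` for `κ ≤ κ'`. -/
lemma cPhi_concave {κ κ' t : ℝ} (h0 : 0 ≤ κ) (h : κ ≤ κ') (ht : 0 ≤ t) :
    κ * cPhi (κ' * t) ≤ κ' * cPhi (κ * t) := by
  have e : ∀ c, cPhi (c * t) = c * ∫ s in (0 : ℝ)..t, gaussianPDFReal 0 1 (c * s) := by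
    intro c
    rw [cPhi_eq_integral]
    have := intervalIntegral.smul_integral_comp_mul_left (a := 0) (b := t)
      (gaussianPDFReal 0 1) c
    rw [mul_zero, smul_eq_mul] at this
    exact this.symm
  have hc : Continuous (gaussianPDFReal 0 1) := by
    unfold gaussianPDFReal
    fun_prop
  have hi : ∫ s in (0 : ℝ)..t, gaussianPDFReal 0 1 (κ' * s)
      ≤ ∫ s in (0 : ℝ)..t, gaussianPDFReal 0 1 (κ * s) := by
    refine intervalIntegral.integral_mono_on ht
      ((hc.comp (by fun_prop)).intervalIntegrable _ _)
      ((hc.comp (by fun_prop)).intervalIntegrable _ _) fun s hs => ?_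
    have h0s : 0 ≤ κ * s - 0 := by simpa using mul_nonneg h0 hs.1
    have h1s : κ * s ≤ κ' * s := mul_le_mul_of_nonneg_right h hs.1
    rw [gaussianPDFReal, gaussianPDFReal]
    gcongr
  rw [e, e]
  calc κ * (κ' * ∫ s in (0 : ℝ)..t, gaussianPDFReal 0 1 (κ' * s))
      = κ * κ' * ∫ s in (0 : ℝ)..t, gaussianPDFReal 0 1 (κ' * s) := by ring
    _ ≤ κ * κ' * ∫ s in (0 : ℝ)..t, gaussianPDFReal 0 1 (κ * s) :=
      mul_le_mul_of_nonneg_left hi (mul_nonneg h0 (h0.trans h))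
    _ = _ := by ring

/-! ### Half spaces -/

section HalfSpace

variable {k : ℕ} {v : Euc k}

/-- The coordinate in a unit direction is a standard Gaussian on the line. -/
lemma map_inner_gauss (hv : ‖v‖ = 1) :
    (gaussMeasure k).map (fun x => ⟪x, v⟫) = gaussianReal 0 1 := by
  have h := IsGaussian.map_eq_gaussianReal (μ := gaussMeasure k) (innerSL ℝ v)
  have e : (fun x : Euc k => ⟪x, v⟫) = innerSL ℝ v := by
    ext x; simp [real_inner_comm]
  rw [e, h]
  simp only [gaussMeasure_eq]
  rw [integral_strongDual_stdGaussian, variance_dual_stdGaussian]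
  congr 1
  rw [innerSL_apply_norm, hv]; simp

lemma measure_halfSpace (hv : ‖v‖ = 1) (t : ℝ) :
    (gaussMeasure k).real {x | t < ⟪x, v⟫} = Phi (-t) := by
  have h := map_inner_gauss hv
  have : {x : Euc k | t < ⟪x, v⟫} = (fun x => ⟪x, v⟫) ⁻¹' (Ioi t) := rfl
  rw [this, ← map_measureReal_apply (by fun_prop) measurableSet_Ioi, h, Phi_neg, Phi_eq_real]
  rw [← compl_Iic, probReal_compl_eq_one_sub measurableSet_Iic]
  have := nullSingletonClass_gaussianReal (μ := 0) (v := 1) one_ne_zero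
  rw [measureReal_congr Iio_ae_eq_Iic.symm]

/-- A half space of Gaussian measure `1 / 2` passes through the origin. -/
lemma threshold_eq_zero (hv : ‖v‖ = 1) {t : ℝ}
    (h : gaussMeasure k {x | t < ⟪x, v⟫} = ENNReal.ofReal (1 / 2)) : t = 0 := by
  have h1 := measure_halfSpace hv t
  rw [measureReal_def, h, ENNReal.toReal_ofReal (by norm_num)] at h1
  have h2 : cPhi (-t) = 0 := by rw [cPhi, ← h1]; norm_num
  rcases lt_trichotomy t 0 with ht | ht | ht
  · exact absurd h2 (cPhi_pos (by linarith)).ne'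
  · exact ht
  · rw [cPhi_neg] at h2
    have := cPhi_pos ht
    linarith

lemma measurable_halfSpace (v : Euc k) (t : ℝ) : MeasurableSet {x : Euc k | t < ⟪x, v⟫} :=
  measurableSet_lt measurable_const (by fun_prop)

/-- The Ornstein–Uhlenbeck operator applied to a half space through the origin. -/
lemma ouOp_halfSpace (hv : ‖v‖ = 1) {r : ℝ} (h0 : 0 ≤ r) (h1 : r < 1) (x : Euc k) :
    ouOp k r ({x | 0 < ⟪x, v⟫}.indicator fun _ => (1 : ℝ)) x
      = Phi (r / √(1 - r ^ 2) * ⟪x, v⟫) := by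
  have hy : 0 < √(1 - r ^ 2) := Real.sqrt_pos.2 (by nlinarith)
  set t := r / √(1 - r ^ 2) * ⟪x, v⟫ with ht
  have e : ∀ y, ({x : Euc k | 0 < ⟪x, v⟫}.indicator fun _ => (1 : ℝ)) (r • x + √(1 - r ^ 2) • y)
      = ({x | -t < ⟪x, v⟫}.indicator fun _ => (1 : ℝ)) y := by
    intro y
    have : (0 < ⟪r • x + √(1 - r ^ 2) • y, v⟫) ↔ -t < ⟪y, v⟫ := by
      rw [inner_add_left, real_inner_smul_left, real_inner_smul_left, ht]
      rw [show -(r / √(1 - r ^ 2) * ⟪x, v⟫) = -(r * ⟪x, v⟫) / √(1 - r ^ 2) by ring,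
        div_lt_iff₀ hy]
      constructor <;> intro h <;> linarith
    simp only [indicator, mem_ofPred_eq, this]
  rw [ouOp]
  simp_rw [e]
  rw [integral_indicator_const _ (measurable_halfSpace v (-t)), measure_halfSpace hv]
  simp

lemma integral_inner_sq (w : Euc k) : ∫ x, ⟪w, x⟫ ^ 2 ∂(gaussMeasure k) = ‖w‖ ^ 2 := by
  have h := variance_dual_stdGaussian (E := Euc k) (innerSL ℝ w)
  rw [variance_eq_integral (by fun_prop), integral_strongDual_stdGaussian, innerSL_apply_norm] at h
  simpa [gaussMeasure_eq] using h

lemma integrable_inner_sq (w : Euc k) :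
    Integrable (fun x => ⟪w, x⟫ ^ 2) (gaussMeasure k) :=
  (IsGaussian.memLp_dual (gaussMeasure k) (innerSL ℝ w) 2 (by simp)).integrable_sq

lemma integrable_id_gauss (k : ℕ) : Integrable (fun x : Euc k => x) (gaussMeasure k) :=
  IsGaussian.integrable_id

lemma inner_bary {A : Set (Euc k)} (hA : MeasurableSet A) (w : Euc k) :
    ⟪w, bary k A⟫ = ∫ x, A.indicator (fun _ => (1 : ℝ)) x * ⟪w, x⟫ ∂(gaussMeasure k) := by
  rw [bary, ← integral_inner (integrable_id_gauss k).integrableOn, ← integral_indicator hA]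
  congr 1; ext x
  by_cases h : x ∈ A <;> simp [h]

lemma integrable_ind_inner {A : Set (Euc k)} (hA : MeasurableSet A) (w : Euc k) :
    Integrable (fun x => A.indicator (fun _ => (1 : ℝ)) x * ⟪w, x⟫) (gaussMeasure k) := by
  refine (((integrable_id_gauss k).const_inner w).indicator hA).congr
    (Eventually.of_forall fun x => ?_)
  by_cases h : x ∈ A <;> simp [h]

/-- By the inequality `2⟪e, x⟫ ≤ 1 + ⟪e, x⟫²`, integrated over the set. -/
lemma norm_bary_le {A : Set (Euc k)} (hA : MeasurableSet A) : ‖bary k A‖ ≤ 1 := by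
  rcases eq_or_ne (bary k A) 0 with h | h
  · rw [h, norm_zero]; exact zero_le_one
  set b := bary k A with hb
  have hn : 0 < ‖b‖ := norm_pos_iff.2 h
  set e := ‖b‖⁻¹ • b with he
  have hen : ‖e‖ = 1 := by rw [he, norm_smul, norm_inv, norm_norm, inv_mul_cancel₀ hn.ne']
  have h1 : ⟪e, b⟫ = ‖b‖ := by
    rw [he, real_inner_smul_left, real_inner_self_eq_norm_sq]; field_simp
  rw [← h1, hb, inner_bary hA]
  have h2 : ∫ x, (1 + ⟪e, x⟫ ^ 2) / 2 ∂(gaussMeasure k) = 1 := by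
    rw [integral_div, integral_add (integrable_const _) (integrable_inner_sq e),
      integral_inner_sq, hen]
    simp
  refine le_of_le_of_eq ?_ h2
  refine integral_mono (integrable_ind_inner hA e)
    (((integrable_const 1).add (integrable_inner_sq e)).div_const 2) fun x => ?_
  by_cases h : x ∈ A
  · simp only [indicator_of_mem h]
    nlinarith [sq_nonneg (⟪e, x⟫ - 1)]
  · simp only [indicator_of_notMem h]
    nlinarith [sq_nonneg ⟪e, x⟫]

/-- The barycenter of a half space through the origin is a nonnegative multiple of its inner
normal, because the reflection across the line of the normal preserves both the half space and
the Gaussian measure. -/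
lemma bary_halfSpace (hv : ‖v‖ = 1) :
    ∃ a : ℝ, 0 ≤ a ∧ bary k {x : Euc k | 0 < ⟪x, v⟫} = a • v := by
  set H := {x : Euc k | 0 < ⟪x, v⟫} with hH
  have hHm : MeasurableSet H := measurable_halfSpace v 0
  set R := (ℝ ∙ v).reflection with hR
  have hRv : R v = v := by
    rw [hR, Submodule.reflection_mem_subspace_eq_self (Submodule.mem_span_singleton_self v)]
  have hRi : ∀ x, ⟪R x, v⟫ = ⟪x, v⟫ := fun x => by
    nth_rewrite 1 [← hRv]
    exact R.inner_map_map x v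
  have hmap : (gaussMeasure k).map R = gaussMeasure k := by
    rw [gaussMeasure_eq]; exact stdGaussian_map R
  have hinv : R (bary k H) = bary k H := by
    have h1 : bary k H = ∫ x in R ⁻¹' H, R x ∂(gaussMeasure k) := by
      have hmp : MeasurePreserving R (gaussMeasure k) (gaussMeasure k) :=
        ⟨R.continuous.measurable, hmap⟩
      rw [hmp.setIntegral_preimage_emb R.toHomeomorph.measurableEmbedding (fun x => x) H, bary]
    have h2 : R ⁻¹' H = H := by
      ext x
      change 0 < ⟪R x, v⟫ ↔ 0 < ⟪x, v⟫
      rw [hRi]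
    rw [h2] at h1
    rw [h1]
    have h3 := R.toContinuousLinearEquiv.integral_comp_comm (μ := (gaussMeasure k).restrict H)
      (fun x => x)
    rw [← h1]
    exact h3.symm.trans h1.symm
  refine ⟨⟪v, bary k H⟫, ?_, ?_⟩
  · rw [inner_bary hHm]
    refine integral_nonneg fun x => ?_
    by_cases h : x ∈ H
    · have h' : 0 < ⟪x, v⟫ := h
      simp only [indicator_of_mem h, Pi.zero_apply, one_mul]
      rw [real_inner_comm]; exact h'.le
    · simp [h]
  · have h := Submodule.reflection_singleton_apply (𝕜 := ℝ) v (bary k H)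
    rw [← hR, hinv, hv] at h
    simp only [RCLike.ofReal_real_eq_id, id_eq, one_pow, div_one] at h
    have h2 : (2 : ℝ) • bary k H = (2 : ℝ) • (⟪v, bary k H⟫ • v) := by
      rw [two_smul]
      nth_rewrite 1 [h]
      rw [sub_add_cancel, two_smul, two_smul]
    exact smul_right_injective _ (two_ne_zero (α := ℝ)) h2

end HalfSpace

/-! ### Doubling the angle -/

section Doubling

variable {k : ℕ} {r : ℝ} {A : Set (Euc k)}

local notation "𝟙" A => Set.indicator A (fun _ => (1 : ℝ))

/-- For standard Gaussians `Y`, `G` put `X = rY + √(1-r²)G` and `Z = rY - √(1-r²)G`. The pairs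
`(X, Y)` and `(Y, Z)` are `r`-correlated, while `(X, Z)` is `(2r² - 1)`-correlated. -/
lemma integral_double (hA : MeasurableSet A) (hr0 : 0 < r) (hr1 : r < 1) :
    ∫ p : Euc k × Euc k, ((𝟙 A) p.1 + (𝟙 A) (r • p.1 + √(1 - r ^ 2) • p.2) *
        (𝟙 A) (r • p.1 - √(1 - r ^ 2) • p.2)
        - (𝟙 A) p.1 * (𝟙 A) (r • p.1 + √(1 - r ^ 2) • p.2)
        - (𝟙 A) p.1 * (𝟙 A) (r • p.1 - √(1 - r ^ 2) • p.2))
        ∂((gaussMeasure k).prod (gaussMeasure k))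
      = (gaussMeasure k).real A + Q k (2 * r ^ 2 - 1) (𝟙 A) (𝟙 A) - 2 * Q k r (𝟙 A) (𝟙 A) := by
  have hI := Bdd.ind hA
  have hσ0 : 0 ≤ √(1 - r ^ 2) := Real.sqrt_nonneg _
  have hσ2 : √(1 - r ^ 2) ^ 2 = 1 - r ^ 2 := Real.sq_sqrt (by nlinarith)
  set σ := √(1 - r ^ 2) with hσ
  have hY : Bdd (fun p : Euc k × Euc k => (𝟙 A) p.1) := hI.comp measurable_fst
  have hX : Bdd (fun p : Euc k × Euc k => (𝟙 A) (r • p.1 + σ • p.2)) :=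
    hI.comp (φ := fun p : Euc k × Euc k => r • p.1 + σ • p.2) (by fun_prop)
  have hZ : Bdd (fun p : Euc k × Euc k => (𝟙 A) (r • p.1 - σ • p.2)) :=
    hI.comp (φ := fun p : Euc k × Euc k => r • p.1 - σ • p.2) (by fun_prop)
  rw [integral_sub (((hY.add (hX.mul hZ)).sub (hY.mul hX)).integrable _)
      ((hY.mul hZ).integrable _),
    integral_sub ((hY.add (hX.mul hZ)).integrable _) ((hY.mul hX).integrable _),
    integral_add (hY.integrable _) ((hX.mul hZ).integrable _)]
  have e1 : ∫ p : Euc k × Euc k, (𝟙 A) p.1 ∂((gaussMeasure k).prod (gaussMeasure k))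
      = (gaussMeasure k).real A := by
    rw [integral_fun_fst (μ := gaussMeasure k) (ν := gaussMeasure k) (𝟙 A),
      integral_indicator_const _ hA]
    simp
  have e2 : ∫ p : Euc k × Euc k, (𝟙 A) p.1 * (𝟙 A) (r • p.1 - σ • p.2)
      ∂((gaussMeasure k).prod (gaussMeasure k)) = Q k r (𝟙 A) (𝟙 A) := by
    have := integral_prod_neg (fun x y : Euc k => (𝟙 A) x * (𝟙 A) (r • x + σ • y))
    simp only [smul_neg, ← sub_eq_add_neg] at this
    rw [this, Q]
  have e3 : ∫ p : Euc k × Euc k, (𝟙 A) (r • p.1 + σ • p.2) * (𝟙 A) (r • p.1 - σ • p.2)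
      ∂((gaussMeasure k).prod (gaussMeasure k)) = Q k (2 * r ^ 2 - 1) (𝟙 A) (𝟙 A) := by
    have hs : r ^ 2 + σ ^ 2 = 1 := by rw [hσ2]; ring
    rw [Q, ← integral_refl hs (hI.pair hI (2 * r ^ 2 - 1)).1]
    congr 1; ext p
    have hq : √(1 - (2 * r ^ 2 - 1) ^ 2) = 2 * r * σ := by
      rw [show 1 - (2 * r ^ 2 - 1) ^ 2 = (2 * r * σ) ^ 2 by rw [mul_pow, hσ2]; ring,
        Real.sqrt_sq (by positivity)]
    rw [hq]
    congr 2
    have c1 : r = (2 * r ^ 2 - 1) * r + 2 * r * σ * σ := by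
      rw [mul_assoc (2 * r), ← sq, hσ2]; ring
    nth_rewrite 1 [c1]
    module
  rw [e1, e2, e3]
  simp only [Q]
  ring

/-- The inequality behind subadditivity of the noise stability deficit under doubling of the angle: the
integrand in `integral_double` is nonnegative for every set. Equality for half spaces is `double_eq`. -/
lemma double_le (hA : MeasurableSet A) (hr0 : 0 < r) (hr1 : r < 1) :
    2 * Q k r (𝟙 A) (𝟙 A) ≤ (gaussMeasure k).real A + Q k (2 * r ^ 2 - 1) (𝟙 A) (𝟙 A) := by
  have h := integral_double hA hr0 hr1
  have : 0 ≤ (gaussMeasure k).real A + Q k (2 * r ^ 2 - 1) (𝟙 A) (𝟙 A)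
      - 2 * Q k r (𝟙 A) (𝟙 A) := by
    rw [← h]
    refine integral_nonneg fun p => ?_
    by_cases h1 : p.1 ∈ A <;> by_cases h2 : r • p.1 + √(1 - r ^ 2) • p.2 ∈ A <;>
      by_cases h3 : r • p.1 - √(1 - r ^ 2) • p.2 ∈ A <;> simp [h1, h2, h3]
  linarith

/-- For half spaces through the origin, doubling of the angle is additive, because in the notation
of `integral_double` the sum `X + Z` is a positive multiple of `Y`. -/
lemma double_eq (v : Euc k) (hr0 : 0 < r) (hr1 : r < 1) :
    2 * Q k r (𝟙 {x : Euc k | 0 < ⟪x, v⟫}) (𝟙 {x : Euc k | 0 < ⟪x, v⟫})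
      = (gaussMeasure k).real {x : Euc k | 0 < ⟪x, v⟫} +
        Q k (2 * r ^ 2 - 1) (𝟙 {x : Euc k | 0 < ⟪x, v⟫}) (𝟙 {x : Euc k | 0 < ⟪x, v⟫}) := by
  have h := integral_double (measurable_halfSpace v 0) hr0 hr1
  rw [integral_eq_zero_of_ae] at h
  · linarith
  refine Eventually.of_forall fun p => ?_
  have hsum : ⟪r • p.1 + √(1 - r ^ 2) • p.2, v⟫ + ⟪r • p.1 - √(1 - r ^ 2) • p.2, v⟫
      = 2 * r * ⟪p.1, v⟫ := by
    rw [← inner_add_left, add_add_sub_cancel, ← two_smul ℝ, smul_smul, real_inner_smul_left]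
  simp only [indicator, mem_ofPred_eq, Pi.zero_apply]
  generalize ⟪r • p.1 + √(1 - r ^ 2) • p.2, v⟫ = x at *
  generalize ⟪r • p.1 - √(1 - r ^ 2) • p.2, v⟫ = z at *
  generalize ⟪p.1, v⟫ = y at *
  by_cases hy : 0 < y
  · have : 0 < 2 * r * y := by positivity
    by_cases hx : 0 < x <;> by_cases hz : 0 < z <;> simp [hy, hx, hz]
    linarith
  · have : 2 * r * y ≤ 0 := mul_nonpos_of_nonneg_of_nonpos (by positivity) (not_lt.1 hy)
    by_cases hx : 0 < x <;> by_cases hz : 0 < z <;> simp [hy, hx, hz]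
    linarith

end Doubling

/-! ### Deficit and reference functional -/

section Core

variable {k : ℕ}

local notation "𝟙" A => Set.indicator A (fun _ => (1 : ℝ))

lemma Q_quad {f g : Euc k → ℝ} (hf : Bdd f) (hg : Bdd g) (a : ℝ) {r : ℝ} (hr : r ^ 2 ≤ 1) :
    Q k r (fun x => f x + a * g x) (fun x => f x + a * g x)
      = Q k r f f + 2 * a * Q k r f g + a ^ 2 * Q k r g g := by
  rw [Q_add_left (hf.add (hg.smul a)) hf (hg.smul a), Q_smul_left, Q_add_right hf hf (hg.smul a),
    Q_add_right hg hf (hg.smul a), Q_smul_right, Q_smul_right, Q_symm hg hf hr]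
  ring

lemma integral_ind {A : Set (Euc k)} (hA : MeasurableSet A) :
    ∫ x, (𝟙 A) x ∂(gaussMeasure k) = (gaussMeasure k).real A := by
  rw [integral_indicator_const _ hA]; simp

lemma Q_zero {f g : Euc k → ℝ} (hf : Bdd f) (hg : Bdd g) :
    Q k 0 f g = (∫ x, f x ∂(gaussMeasure k)) * ∫ x, g x ∂(gaussMeasure k) := by
  rw [Q_eq hf hg]
  simp [ouOp, integral_mul_const]

variable {v : Euc k} {Ω : Set (Euc k)} {s : ℝ}

/-- The noise bilinear form against a half space, split into its centred part and its mean. -/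
lemma Q_halfSpace (hv : ‖v‖ = 1) {r : ℝ} (h0 : 0 ≤ r) (h1 : r < 1) {f : Euc k → ℝ} (hf : Bdd f) :
    Q k r f (𝟙 {x : Euc k | 0 < ⟪x, v⟫})
      = ∫ x, f x * cPhi (r / √(1 - r ^ 2) * ⟪x, v⟫) ∂(gaussMeasure k)
        + 1 / 2 * ∫ x, f x ∂(gaussMeasure k) := by
  have hc : Bdd (fun x : Euc k => cPhi (r / √(1 - r ^ 2) * ⟪x, v⟫)) :=
    bdd_cPhi.comp (φ := fun x : Euc k => r / √(1 - r ^ 2) * ⟪x, v⟫) (by fun_prop)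
  rw [Q_eq hf (Bdd.ind (measurable_halfSpace v 0)), ← integral_const_mul,
    ← integral_add ((hf.mul hc).integrable _) ((hf.smul _).integrable _)]
  congr 1; ext x
  rw [ouOp_halfSpace hv h0 h1, cPhi]
  ring

/-- The weight against which the reference functional `refB` integrates the centred distribution
function of the coordinate `⟪x, v⟫`. -/
def wt (v : Euc k) (Ω : Set (Euc k)) (s : ℝ) (x : Euc k) : ℝ :=
  (1 - s) ^ 2 * (𝟙 {x : Euc k | 0 < ⟪x, v⟫}) x
    + 2 * s * ((𝟙 {x : Euc k | 0 < ⟪x, v⟫}) x - (𝟙 Ω) x)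

/-- The reference functional `r ↦ B r`, normalised so that `B r - D r` is the noise stability of
`1_Ω - s 1_H - (1 - s) / 2`, where `D` is the noise stability deficit. -/
def refB (v : Euc k) (Ω : Set (Euc k)) (s r : ℝ) : ℝ :=
  (1 - s) ^ 2 * (Q k r (𝟙 {x : Euc k | 0 < ⟪x, v⟫}) (𝟙 {x : Euc k | 0 < ⟪x, v⟫}) - 1 / 4)
    + 2 * s * (Q k r (𝟙 {x : Euc k | 0 < ⟪x, v⟫}) (𝟙 {x : Euc k | 0 < ⟪x, v⟫})
      - Q k r (𝟙 Ω) (𝟙 {x : Euc k | 0 < ⟪x, v⟫}))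

lemma bdd_wt (hΩ : MeasurableSet Ω) : Bdd (wt v Ω s) :=
  ((Bdd.ind (measurable_halfSpace v 0)).smul _).add
    (((Bdd.ind (measurable_halfSpace v 0)).sub (Bdd.ind hΩ)).smul _)

/-- The weight has the sign of `⟪x, v⟫`, hence the sign of `cPhi (κ * ⟪x, v⟫)` for `κ ≥ 0`; the other
half of this is `wt_nonpos`. -/
lemma wt_nonneg (hs : 0 ≤ s) {x : Euc k} (hx : 0 < ⟪x, v⟫) : 0 ≤ wt v Ω s x := by
  by_cases h : x ∈ Ω
  · simp [wt, h, hx, sq_nonneg]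
  · simp only [wt, indicator, mem_ofPred_eq, hx, h, if_true, if_false]
    positivity

lemma wt_nonpos (hs : 0 ≤ s) {x : Euc k} (hx : ⟪x, v⟫ ≤ 0) : wt v Ω s x ≤ 0 := by
  by_cases h : x ∈ Ω
  · simp [wt, h, hx.not_gt, hs]
  · simp [wt, h, hx.not_gt]

lemma bdd_cPhi_inner (κ : ℝ) (v : Euc k) : Bdd (fun x : Euc k => cPhi (κ * ⟪x, v⟫)) :=
  bdd_cPhi.comp (φ := fun x : Euc k => κ * ⟪x, v⟫) (by fun_prop)

lemma refB_eq (hv : ‖v‖ = 1) (hΩ : MeasurableSet Ω) (hΩa : (gaussMeasure k).real Ω = 1 / 2)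
    (hHa : (gaussMeasure k).real {x | 0 < ⟪x, v⟫} = 1 / 2) {r : ℝ} (h0 : 0 ≤ r) (h1 : r < 1) :
    refB v Ω s r
      = ∫ x, wt v Ω s x * cPhi (r / √(1 - r ^ 2) * ⟪x, v⟫) ∂(gaussMeasure k) := by
  have hHm := measurable_halfSpace v 0
  have hc := bdd_cPhi_inner (r / √(1 - r ^ 2)) v
  have e : ∀ x, wt v Ω s x * cPhi (r / √(1 - r ^ 2) * ⟪x, v⟫)
      = ((1 - s) ^ 2 + 2 * s) *
          ((𝟙 {x : Euc k | 0 < ⟪x, v⟫}) x * cPhi (r / √(1 - r ^ 2) * ⟪x, v⟫))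
        - 2 * s * ((𝟙 Ω) x * cPhi (r / √(1 - r ^ 2) * ⟪x, v⟫)) := fun x => by
    rw [wt]; ring
  simp_rw [e]
  rw [integral_sub ((((Bdd.ind hHm).mul hc).smul _).integrable _)
    ((((Bdd.ind hΩ).mul hc).smul _).integrable _), integral_const_mul, integral_const_mul, refB,
    Q_halfSpace hv h0 h1 (Bdd.ind hHm), Q_halfSpace hv h0 h1 (Bdd.ind hΩ), integral_ind hHm,
    integral_ind hΩ, hΩa, hHa]
  ring

lemma refB_nonneg (hv : ‖v‖ = 1) (hΩ : MeasurableSet Ω)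
    (hΩa : (gaussMeasure k).real Ω = 1 / 2)
    (hHa : (gaussMeasure k).real {x | 0 < ⟪x, v⟫} = 1 / 2) (hs : 0 ≤ s)
    {r : ℝ} (h0 : 0 < r) (h1 : r < 1) : 0 ≤ refB v Ω s r := by
  rw [refB_eq hv hΩ hΩa hHa h0.le h1]
  have hκ : 0 ≤ r / √(1 - r ^ 2) := by positivity
  refine integral_nonneg fun x => ?_
  rcases lt_or_ge 0 ⟪x, v⟫ with hx | hx
  · exact mul_nonneg (wt_nonneg hs hx) (cPhi_nonneg (mul_nonneg hκ hx.le))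
  · refine mul_nonneg_of_nonpos_of_nonpos (wt_nonpos hs hx) ?_
    have := cPhi_nonneg (mul_nonneg hκ (neg_nonneg.2 hx))
    rw [mul_neg, cPhi_neg] at this
    linarith

/-- With `κ(r) = r / √(1 - r ^ 2)`, the quotient `B(r) / κ(r)` is nonincreasing in `r`: pointwise this is
`cPhi_concave`, the weight being of one sign on either side of the hyperplane. -/
lemma refB_concave (hv : ‖v‖ = 1) (hΩ : MeasurableSet Ω)
    (hΩa : (gaussMeasure k).real Ω = 1 / 2)
    (hHa : (gaussMeasure k).real {x | 0 < ⟪x, v⟫} = 1 / 2) (hs : 0 ≤ s)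
    {r r' : ℝ} (h0 : 0 < r) (hrr : r ≤ r') (h1 : r' < 1) :
    r / √(1 - r ^ 2) * refB v Ω s r' ≤ r' / √(1 - r' ^ 2) * refB v Ω s r := by
  have hκ0 : 0 ≤ r / √(1 - r ^ 2) := by positivity
  have hκ : r / √(1 - r ^ 2) ≤ r' / √(1 - r' ^ 2) := by
    have : 0 < √(1 - r' ^ 2) := Real.sqrt_pos.2 (by nlinarith)
    have := h0.le.trans hrr
    gcongr
  rw [refB_eq hv hΩ hΩa hHa h0.le (hrr.trans_lt h1),
    refB_eq hv hΩ hΩa hHa (h0.le.trans hrr) h1, ← integral_const_mul, ← integral_const_mul]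
  set κ := r / √(1 - r ^ 2)
  set κ' := r' / √(1 - r' ^ 2)
  have hW : Bdd (wt v Ω s) := bdd_wt hΩ
  refine integral_mono (((hW.mul (bdd_cPhi_inner κ' v)).smul κ).integrable _)
    (((hW.mul (bdd_cPhi_inner κ v)).smul κ').integrable _) fun x => ?_
  simp only
  rw [mul_left_comm, mul_left_comm κ']
  rcases lt_or_ge 0 ⟪x, v⟫ with hx | hx
  · exact mul_le_mul_of_nonneg_left (cPhi_concave hκ0 hκ hx.le) (wt_nonneg hs hx)
  · refine mul_le_mul_of_nonpos_left ?_ (wt_nonpos hs hx)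
    have := cPhi_concave hκ0 hκ (neg_nonneg.2 hx)
    rw [mul_neg, mul_neg, cPhi_neg, cPhi_neg] at this
    linarith

/-- The noise stability deficit of `Ω` with respect to the half space `{x | 0 < ⟪x, v⟫}`. -/
def deficit (v : Euc k) (Ω : Set (Euc k)) (r : ℝ) : ℝ :=
  Q k r (𝟙 {x : Euc k | 0 < ⟪x, v⟫}) (𝟙 {x : Euc k | 0 < ⟪x, v⟫}) - Q k r (𝟙 Ω) (𝟙 Ω)

/-- The spectral gap applied to `1_Ω - s 1_H - (1 - s) / 2`, which has mean zero and, by the choice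
of `s`, vanishing barycenter. -/
lemma deficit_gap (hΩ : MeasurableSet Ω)
    (hΩa : (gaussMeasure k).real Ω = 1 / 2)
    (hHa : (gaussMeasure k).real {x | 0 < ⟪x, v⟫} = 1 / 2)
    (hb : bary k Ω = s • bary k {x | 0 < ⟪x, v⟫})
    {r r' : ℝ} (h0 : 0 < r) (hrr : r ≤ r') (h1 : r' < 1) :
    (r / r') ^ 2 * deficit v Ω r' + refB v Ω s r - (r / r') ^ 2 * refB v Ω s r'
      ≤ deficit v Ω r := by
  rcases hrr.eq_or_lt with rfl | hlt
  · rw [div_self h0.ne']; linarith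
  have hHm := measurable_halfSpace v 0
  have hH := Bdd.ind hHm
  have hO := Bdd.ind hΩ
  have h1b : Bdd (fun _ : Euc k => (1 : ℝ)) := Bdd.const 1
  have hf := hO.add (hH.smul (-s))
  have hg := hf.add (h1b.smul (-((1 - s) / 2)))
  have e : ∀ r, 0 < r → r < 1 →
      Q k r (fun x => ((𝟙 Ω) x + -s * (𝟙 {x : Euc k | 0 < ⟪x, v⟫}) x) + -((1 - s) / 2) * 1)
        (fun x => ((𝟙 Ω) x + -s * (𝟙 {x : Euc k | 0 < ⟪x, v⟫}) x) + -((1 - s) / 2) * 1)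
      = refB v Ω s r - deficit v Ω r := by
    intro r h0 h1
    have hr : r ^ 2 ≤ 1 := by nlinarith
    rw [Q_quad hf h1b _ hr, Q_quad hO hH _ hr, Q_const_right hf, Q_const_right h1b,
      integral_add (hO.integrable _) ((hH.smul _).integrable _), integral_const_mul,
      integral_ind hHm, integral_ind hΩ, hΩa, hHa, refB, deficit]
    simp
    ring
  have hgap := Q_gap hg ?_ ?_ h0 hlt h1
  · rw [e r h0 (hlt.trans h1), e r' (h0.trans hlt) h1] at hgap
    linarith
  · rw [integral_add (hf.integrable _) ((h1b.smul _).integrable _),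
      integral_add (hO.integrable _) ((hH.smul _).integrable _), integral_const_mul,
      integral_const_mul, integral_ind hHm, integral_ind hΩ, hΩa, hHa]
    simp
    ring
  · intro w
    have hw : Integrable (fun x => ⟪w, x⟫) (gaussMeasure k) :=
      (integrable_id_gauss k).const_inner w
    have e2 : ∀ x, ((𝟙 Ω) x + -s * (𝟙 {x : Euc k | 0 < ⟪x, v⟫}) x + -((1 - s) / 2) * 1) * ⟪w, x⟫
        = (𝟙 Ω) x * ⟪w, x⟫ - s * ((𝟙 {x : Euc k | 0 < ⟪x, v⟫}) x * ⟪w, x⟫)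
          - (1 - s) / 2 * ⟪w, x⟫ := fun x => by ring
    have hz : ∫ x, ⟪w, x⟫ ∂(gaussMeasure k) = 0 := by
      have := integral_strongDual_stdGaussian (E := Euc k) (innerSL ℝ w)
      simpa [gaussMeasure_eq] using this
    simp_rw [e2]
    have hi : Integrable (fun x => (𝟙 Ω) x * ⟪w, x⟫
        - s * ((𝟙 {x : Euc k | 0 < ⟪x, v⟫}) x * ⟪w, x⟫)) (gaussMeasure k) :=
      (integrable_ind_inner hΩ w).sub ((integrable_ind_inner hHm w).const_mul s)
    rw [integral_sub hi (hw.const_mul _),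
      integral_sub (integrable_ind_inner hΩ w) ((integrable_ind_inner hHm w).const_mul s),
      integral_const_mul, integral_const_mul, ← inner_bary hΩ, ← inner_bary hHm, hb,
      real_inner_smul_right, hz]
    ring

/-- The deficit dominates the reference functional, by the real-variable argument. -/
lemma refB_le_deficit (hv : ‖v‖ = 1) (hΩ : MeasurableSet Ω)
    (hΩa : (gaussMeasure k).real Ω = 1 / 2)
    (hHa : (gaussMeasure k).real {x | 0 < ⟪x, v⟫} = 1 / 2) (hs : 0 ≤ s)
    (hb : bary k Ω = s • bary k {x | 0 < ⟪x, v⟫}) {r : ℝ} (h0 : 0 < r) (h1 : r < 1) :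
    9 / 4000 * (1 - r ^ 2) ^ 2 * refB v Ω s r ≤ deficit v Ω r := by
  have hHm := measurable_halfSpace v 0
  refine bootstrap (D := deficit v Ω) (B := refB v Ω s) (fun r h0 h1 => ?_) ?_
    (fun r r' => deficit_gap hΩ hΩa hHa hb) (fun r r' => refB_concave hv hΩ hΩa hHa hs)
    (fun r => refB_nonneg hv hΩ hΩa hHa hs) h0 h1
  · have e1 := double_eq v h0 h1
    have e2 := double_le hΩ h0 h1
    rw [hHa] at e1
    rw [hΩa] at e2
    rw [deficit, deficit]
    linarith
  · rw [deficit, Q_zero (Bdd.ind hHm) (Bdd.ind hHm), Q_zero (Bdd.ind hΩ) (Bdd.ind hΩ),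
      integral_ind hHm, integral_ind hΩ, hΩa, hHa, sub_self]

/-- The upper bound: `2 η - δ` is the noise stability of `1_H - 1_Ω`, which is nonnegative. -/
lemma deficit_le (hΩ : MeasurableSet Ω) {r : ℝ} (h0 : 0 < r) (h1 : r < 1) :
    deficit v Ω r ≤ 2 * (Q k r (𝟙 {x : Euc k | 0 < ⟪x, v⟫}) (𝟙 {x : Euc k | 0 < ⟪x, v⟫})
      - Q k r (𝟙 Ω) (𝟙 {x : Euc k | 0 < ⟪x, v⟫})) := by
  have hHm := measurable_halfSpace v 0
  have hg := (Bdd.ind hHm).add ((Bdd.ind hΩ).smul (-1))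
  have hr : r ^ 2 ≤ 1 := by nlinarith
  have h := Q_nonneg hg h0.le h1
  rw [Q_quad (Bdd.ind hHm) (Bdd.ind hΩ) (-1) hr, Q_symm (Bdd.ind hHm) (Bdd.ind hΩ) hr] at h
  rw [deficit]
  linarith

end Core

/-! ### Robust Borell inequality at measure one half -/

/-- Robust Borell's inequality for sets of Gaussian measure `1/2` (Theorem 1.13, case `a = 1/2`). -/
theorem robust_borell_half
    (n : ℕ) (ρ z₀ : ℝ)
    (hρ0 : 0 < ρ) (hρ1 : ρ < 1) (hz₀ : 0 < z₀)
    (Ω : Set (Euc (n + 1))) (hΩmeas : MeasurableSet Ω)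
    (hΩa : gaussMeasure (n + 1) Ω = ENNReal.ofReal (1 / 2))
    (hzne : bary (n + 1) Ω ≠ 0) (hznorm : z₀ ≤ ‖bary (n + 1) Ω‖)
    (H : Set (Euc (n + 1))) (hH : IsHalfSpace (n + 1) H)
    (hHa : gaussMeasure (n + 1) H = ENNReal.ofReal (1 / 2))
    (hHz : ∃ c : ℝ, 0 < c ∧ bary (n + 1) H = c • bary (n + 1) Ω) :
    let z := bary (n + 1) Ω
    let δ := noiseStability (n + 1) ρ H - noiseStability (n + 1) ρ Ω
    let η : ℝ := ∫ x, Phi ((ρ * ⟪‖z‖⁻¹ • z, x⟫) / Real.sqrt (1 - ρ ^ 2)) *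
        (H.indicator (fun _ => (1 : ℝ)) x - Ω.indicator (fun _ => (1 : ℝ)) x)
        ∂(gaussMeasure (n + 1))
    0 ≤ η ∧
      ((10 : ℝ) ^ 9)⁻¹ * ρ ^ 2 * z₀ ^ 2 * (1 - ρ ^ 2) ^ 2 * η ≤ δ ∧
      δ ≤ 2 * η := by
  intro z δ η
  obtain ⟨v, t, hv, rfl⟩ := hH
  obtain rfl := threshold_eq_zero hv hHa
  obtain ⟨c, hc, hcz⟩ := hHz
  have hHm := measurable_halfSpace v 0
  have hΩr : (gaussMeasure (n + 1)).real Ω = 1 / 2 := by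
    rw [measureReal_def, hΩa, ENNReal.toReal_ofReal (by norm_num)]
  have hHr : (gaussMeasure (n + 1)).real {x | 0 < ⟪x, v⟫} = 1 / 2 := by
    rw [measureReal_def, hHa, ENNReal.toReal_ofReal (by norm_num)]
  have hbΩ : bary (n + 1) Ω = c⁻¹ • bary (n + 1) {x | 0 < ⟪x, v⟫} := by
    rw [hcz, inv_smul_smul₀ hc.ne']
  have hs : 0 ≤ c⁻¹ := (inv_pos.2 hc).le
  -- the direction of the barycenter is the inner normal of the half space
  have hzv : ‖z‖⁻¹ • z = v := by
    obtain ⟨a, ha0, ha⟩ := bary_halfSpace hv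
    have hz : z = (c⁻¹ * a) • v := by rw [mul_smul, ← ha]; exact hbΩ
    have hpos : 0 < c⁻¹ * a := by
      refine lt_of_le_of_ne (mul_nonneg hs ha0) fun h0 => hzne ?_
      rw [← h0, zero_smul] at hz
      exact hz
    rw [hz, norm_smul, hv, mul_one, Real.norm_of_nonneg hpos.le, inv_smul_smul₀ hpos.ne']
  -- `z₀ ≤ c⁻¹ ‖bary H‖ ≤ c⁻¹` and `z₀ ≤ ‖bary Ω‖ ≤ 1`
  have hz₀1 : z₀ ≤ 1 := hznorm.trans (norm_bary_le hΩmeas)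
  have hz₀s : z₀ ≤ c⁻¹ := by
    have h1 := hznorm
    rw [hbΩ, norm_smul, Real.norm_of_nonneg hs] at h1
    exact h1.trans (mul_le_of_le_one_right hs (norm_bary_le hHm))
  have hH := Bdd.ind hHm
  have hO := Bdd.ind hΩmeas
  have hδ : δ = deficit v Ω ρ := by
    change noiseStability (n + 1) ρ _ - noiseStability (n + 1) ρ _ = _
    rw [noiseStability, noiseStability, deficit, Q_eq hH hH, Q_eq hO hO]
  have hsub := (hH.mul (hH.ou ρ)).integrable (gaussMeasure (n + 1))
  have hη : η = Q (n + 1) ρ ({x : Euc (n + 1) | 0 < ⟪x, v⟫}.indicator fun _ => (1 : ℝ))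
        ({x : Euc (n + 1) | 0 < ⟪x, v⟫}.indicator fun _ => (1 : ℝ))
      - Q (n + 1) ρ (Ω.indicator fun _ => (1 : ℝ))
        ({x : Euc (n + 1) | 0 < ⟪x, v⟫}.indicator fun _ => (1 : ℝ)) := by
    rw [Q_eq hH hH, Q_eq hO hH, ← integral_sub hsub ((hO.mul (hH.ou ρ)).integrable _)]
    refine integral_congr_ae (Eventually.of_forall fun x => ?_)
    simp only
    rw [hzv, ouOp_halfSpace hv hρ0.le hρ1, real_inner_comm, mul_div_right_comm]
    ring
  have hB := refB_le_deficit hv hΩmeas hΩr hHr hs hbΩ hρ0 hρ1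
  -- for `s = 0` and `s = 1` the reference functional is a single one of its two summands
  have hH0 : 0 ≤ Q (n + 1) ρ ({x : Euc (n + 1) | 0 < ⟪x, v⟫}.indicator fun _ => (1 : ℝ))
        ({x : Euc (n + 1) | 0 < ⟪x, v⟫}.indicator fun _ => (1 : ℝ)) - 1 / 4 := by
    have := refB_nonneg hv hΩmeas hΩr hHr le_rfl hρ0 hρ1
    simpa [refB] using this
  have hη0 : 0 ≤ η := by
    have := refB_nonneg hv hΩmeas hΩr hHr zero_le_one hρ0 hρ1
    rw [refB, ← hη] at this
    linarith
  have hBη : 2 * c⁻¹ * η ≤ refB v Ω c⁻¹ ρ := by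
    rw [refB, ← hη]
    have := mul_nonneg (sq_nonneg (1 - c⁻¹)) hH0
    linarith
  refine ⟨hη0, ?_, ?_⟩
  · rw [hδ]
    refine le_trans ?_ hB
    have hA : 0 ≤ (1 - ρ ^ 2) ^ 2 := sq_nonneg _
    have hρ2 : ρ ^ 2 ≤ 1 := pow_le_one₀ hρ0.le hρ1.le
    have hz2 : z₀ ^ 2 ≤ c⁻¹ := by
      calc z₀ ^ 2 = z₀ * z₀ := sq z₀
        _ ≤ 1 * c⁻¹ := by gcongr
        _ = c⁻¹ := one_mul _
    calc ((10 : ℝ) ^ 9)⁻¹ * ρ ^ 2 * z₀ ^ 2 * (1 - ρ ^ 2) ^ 2 * η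
        ≤ 9 / 2000 * 1 * c⁻¹ * (1 - ρ ^ 2) ^ 2 * η := by
          gcongr
          norm_num
      _ = 9 / 4000 * (1 - ρ ^ 2) ^ 2 * (2 * c⁻¹ * η) := by ring
      _ ≤ _ := by gcongr
  · rw [hδ, hη]
    exact deficit_le hΩmeas hρ0 hρ1
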